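/- arXiv:math/9207210 — 2 statements merged into one kernel-verified Lean document; each statement's English description precedes it below -/
import Mathlib

section
/- Let k be an algebraically closed field of characteristic p > 0, let e be a positive integer and q = p^e, and let n = q + 1. Then the Galois group of the polynomial Y^n - X·Y + 1 over the rational function field k(X) is isomorphic, as a group, to PSL(2,q), i.e., to the quotient of SL(2, F_q) by its center. -/
open Polynomial

/-!
Let `F` be the field with `q` elements and `E` an algebraic closure of `k(x)`. The roots in `E` of
`Y^{q²} - x Y^q + Y` form an `F`-plane `V`, and `v ↦ v^{q-1}` identifies the lines of `V` with the
roots of `Y^{q+1} - x Y + 1`. The Moore determinant `Δ(v, w) = v w^q - w v^q` is an alternating form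
on `V` with values in `F`, so it is fixed by the Galois group, which therefore acts on `V` through
`SL(V)`; an element fixes every line exactly when its image is a scalar, that is, central.

All of `SL(V)` occurs because the Galois group is transitive on the pairs `(z, w)` in `V` with
`Δ(z, w) = 1`. Indeed `x = (z^{q²} + z) / z^q` lies in the rational function field `k(z)`, and
`1/w` is a root of `U^q + z^q U^{q-1} - z`, which is irreducible over `k(z)` by Eisenstein's
criterion at `z`. So `(z, w) ↦ (z', w')` extends to a `k`-automorphism of `E`, and it fixes `x`.
-/

section FiniteField

variable {F E : Type*} [Field F] [Fintype F]

local notation "q" => Fintype.card F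

theorem smul_add_smul_pow_card [CommRing E] [Algebra F E] (a b : F) (v w : E) :
    (a • v + b • w) ^ q = a • v ^ q + b • w ^ q := by
  have h := map_add (FiniteField.frobeniusAlgHom F E) (a • v) (b • w)
  rwa [map_smul, map_smul] at h

variable [Field E] [Algebra F E]

theorem exists_algebraMap_eq_of_pow_card_eq {c : E} (hc : c ^ q = c) :
    ∃ a : F, algebraMap F E a = c := by
  have hsplits : (X ^ q - X : F[X]).Splits := by
    simp [splits_iff_card_roots, FiniteField.roots_X_pow_card_sub_X,
      FiniteField.X_pow_card_sub_X_natDegree_eq _ Fintype.one_lt_card]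
  have hne : (X ^ q - X : F[X]) ≠ 0 := FiniteField.X_pow_card_sub_X_ne_zero _ Fintype.one_lt_card
  exact hsplits.mem_range_of_isRoot hne (by simp [hc])

theorem pow_card_sub_one_eq_iff_exists_smul {v w : E} (hv : v ≠ 0) (hw : w ≠ 0) :
    w ^ (q - 1) = v ^ (q - 1) ↔ ∃ a : F, w = a • v := by
  constructor
  · intro h
    have hdiv : (w / v) ^ q = w / v := by
      rw [← pow_sub_one_mul Fintype.card_ne_zero, div_pow, h, div_self (pow_ne_zero _ hv), one_mul]
    obtain ⟨a, ha⟩ := exists_algebraMap_eq_of_pow_card_eq (F := F) hdiv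
    exact ⟨a, by rw [Algebra.smul_def, ha, div_mul_cancel₀ _ hv]⟩
  · rintro ⟨a, rfl⟩
    rw [_root_.smul_pow, FiniteField.pow_card_sub_one_eq_one a (left_ne_zero_of_smul hw), one_smul]

end FiniteField

section MooreDeterminant

/-- The `2 × 2` Moore determinant `|v w; v^q w^q|`: the analogue of the Wronskian for the `q`-power
Frobenius in place of a derivation. -/
def mooreDet {E : Type*} [CommRing E] (q : ℕ) (v w : E) : E :=
  v * w ^ q - w * v ^ q

theorem mul_mooreDet_eq {E : Type*} [CommRing E] (q : ℕ) (v z w : E) :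
    v * mooreDet q z w = mooreDet q v w * z + mooreDet q z v * w := by
  simp only [mooreDet]
  ring

theorem map_mooreDet {E E' : Type*} [CommRing E] [CommRing E'] (σ : E →+* E') (q : ℕ) (v w : E) :
    σ (mooreDet q v w) = mooreDet q (σ v) (σ w) := by
  simp only [mooreDet, map_sub, map_mul, map_pow]

theorem ne_zero_of_mooreDet_eq_one {E : Type*} [CommRing E] [Nontrivial E] {q : ℕ} (hq : q ≠ 0)
    {z w : E} (hzw : mooreDet q z w = 1) : z ≠ 0 ∧ w ≠ 0 := by
  constructor <;> rintro rfl <;> simp [mooreDet, hq] at hzw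

theorem exists_mooreDet_eq_one {E : Type*} [Field E] [IsAlgClosed E] {q : ℕ} (hq : 1 < q) {z : E}
    (hz : z ≠ 0) : ∃ w, mooreDet q z w = 1 := by
  have hdeg : (X ^ q - X - C ((z * z ^ q)⁻¹)).degree ≠ 0 := by
    refine degree_ne_of_natDegree_ne ?_
    rw [natDegree_sub_C, FiniteField.X_pow_card_sub_X_natDegree_eq E hq]
    exact Nat.ne_zero_of_lt hq
  obtain ⟨t, ht⟩ := IsAlgClosed.exists_root _ hdeg
  have ht : t ^ q - t = (z * z ^ q)⁻¹ := by
    simpa only [IsRoot.def, eval_sub, eval_pow, eval_X, eval_C, sub_eq_zero] using ht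
  refine ⟨z * t, ?_⟩
  calc mooreDet q z (z * t) = z * z ^ q * (t ^ q - t) := by rw [mooreDet, mul_pow]; ring
    _ = 1 := by rw [ht, mul_inv_cancel₀ (mul_ne_zero hz (pow_ne_zero q hz))]

variable {F E : Type*} [Field F] [Fintype F] [CommRing E] [Algebra F E]

local notation "q" => Fintype.card F

theorem mooreDet_linearCombination (a b c d : F) (z w : E) :
    mooreDet q (a • z + b • w) (c • z + d • w) = (a * d - b * c) • mooreDet q z w := by
  rw [mooreDet, mooreDet, smul_add_smul_pow_card, smul_add_smul_pow_card]
  simp only [Algebra.smul_def, map_sub, map_mul]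
  ring

theorem mooreDet_map_eq_det_smul {V : Submodule F E} (b : Module.Basis (Fin 2) F V)
    (g : V →ₗ[F] V) :
    mooreDet q (g (b 0) : E) (g (b 1)) = LinearMap.det g • mooreDet q (b 0 : E) (b 1) := by
  have hg (v : V) : (g v : E) = b.repr (g v) 0 • (b 0 : E) + b.repr (g v) 1 • (b 1 : E) := by
    conv_lhs => rw [← b.sum_repr (g v), Fin.sum_univ_two]
    rfl
  rw [hg (b 0), hg (b 1), mooreDet_linearCombination, ← LinearMap.det_toMatrix b g,
    Matrix.det_fin_two, mul_comm (b.repr (g (b 0)) 1)]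
  simp only [LinearMap.toMatrix_apply]

end MooreDeterminant

section VectorialRoots

variable (F : Type*) {E : Type*} [Field F] [Fintype F]

local notation "q" => Fintype.card F

/-- The roots of the vectorial (`q`-linearised) polynomial `Y^{q²} - x Y^q + Y` in an algebra over
the field `F` with `q` elements, as an `F`-subspace. -/
def vectorialRoots [CommRing E] [Algebra F E] (x : E) : Submodule F E :=
  let φ := (FiniteField.frobeniusAlgHom F E).toLinearMap
  LinearMap.ker (φ ∘ₗ φ - LinearMap.mulLeft F x ∘ₗ φ + LinearMap.id)

variable {F}

theorem mem_vectorialRoots [CommRing E] [Algebra F E] {x v : E} :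
    v ∈ vectorialRoots F x ↔ (v ^ q) ^ q = x * v ^ q - v := by
  simp [vectorialRoots, sub_add, sub_eq_zero]

variable [Field E] [Algebra F E] {x : E}

theorem mooreDet_pow_card {v w : E} (hv : v ∈ vectorialRoots F x) (hw : w ∈ vectorialRoots F x) :
    mooreDet q v w ^ q = mooreDet q v w := by
  rw [mem_vectorialRoots] at hv hw
  calc mooreDet q v w ^ q = mooreDet q (v ^ q) (w ^ q) :=
        map_mooreDet (FiniteField.frobeniusAlgHom F E : E →+* E) q v w
    _ = mooreDet q v w := by
        rw [mooreDet, hv, hw, mooreDet]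
        ring

theorem mem_vectorialRoots_of_mooreDet_eq_one {z w : E} (hz : z ∈ vectorialRoots F x) (hz0 : z ≠ 0)
    (hzw : mooreDet q z w = 1) : w ∈ vectorialRoots F x := by
  have hfrob : mooreDet q (z ^ q) (w ^ q) = 1 := by
    rw [← one_pow q, ← hzw]
    exact (map_mooreDet (FiniteField.frobeniusAlgHom F E : E →+* E) q z w).symm
  rw [mem_vectorialRoots] at hz ⊢
  rw [mooreDet, hz] at hfrob
  rw [mooreDet] at hzw
  refine mul_left_cancel₀ (pow_ne_zero q hz0) ?_
  linear_combination hfrob - hzw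

theorem exists_basis_of_mooreDet_eq_one {z w : E} (hz : z ∈ vectorialRoots F x)
    (hw : w ∈ vectorialRoots F x) (hzw : mooreDet q z w = 1) :
    ∃ b : Module.Basis (Fin 2) F (vectorialRoots F x), (b 0 : E) = z ∧ (b 1 : E) = w := by
  let b : Fin 2 → vectorialRoots F x := ![⟨z, hz⟩, ⟨w, hw⟩]
  have hli : LinearIndependent F b := by
    refine LinearIndependent.pair_iff.2 fun s t hst ↦ ?_
    have hst : s • z + t • w = 0 := congrArg Subtype.val hst
    have hs := mooreDet_linearCombination s t 0 1 z w
    have ht := mooreDet_linearCombination 1 0 s t z w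
    rw [hst, hzw] at hs ht
    simpa [mooreDet, Algebra.smul_def, @eq_comm E 0] using And.intro hs ht
  have hspan : ⊤ ≤ Submodule.span F (Set.range b) := by
    rintro ⟨v, hv⟩ -
    obtain ⟨s, hs⟩ := exists_algebraMap_eq_of_pow_card_eq (mooreDet_pow_card hv hw)
    obtain ⟨t, ht⟩ := exists_algebraMap_eq_of_pow_card_eq (mooreDet_pow_card hz hv)
    rw [Matrix.range_cons_cons_empty, Submodule.mem_span_pair]
    have hcramer : v = s • z + t • w := by
      rw [Algebra.smul_def, Algebra.smul_def, hs, ht, ← mul_mooreDet_eq, hzw, mul_one]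
    exact ⟨s, t, Subtype.ext hcramer.symm⟩
  exact ⟨.mk hli hspan, by simp [b], by simp [b]⟩

end VectorialRoots

section ProjectivePolynomial

/-- Abhyankar's projective polynomial `Y^{q+1} - x Y + 1`. -/
noncomputable def projectivePoly {K : Type*} [CommRing K] (q : ℕ) (x : K) : K[X] :=
  X ^ (q + 1) - C x * X + 1

theorem eval_projectivePoly {K : Type*} [CommRing K] (q : ℕ) (x y : K) :
    (projectivePoly q x).eval y = y ^ (q + 1) - x * y + 1 := by
  simp [projectivePoly]

theorem map_projectivePoly {K L : Type*} [CommRing K] [CommRing L] (i : K →+* L) (q : ℕ) (x : K) :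
    (projectivePoly q x).map i = projectivePoly q (i x) := by
  simp [projectivePoly]

theorem natDegree_projectivePoly {K : Type*} [CommRing K] [Nontrivial K] {q : ℕ} (hq : q ≠ 0)
    (x : K) : (projectivePoly q x).natDegree = q + 1 := by
  unfold projectivePoly
  compute_degree!
  simp [hq]

variable {F E : Type*} [Field F] [Fintype F] [Field E] [Algebra F E]

local notation "q" => Fintype.card F

theorem mem_vectorialRoots_iff_isRoot {x v : E} (hv : v ≠ 0) :
    v ∈ vectorialRoots F x ↔ (projectivePoly q x).IsRoot (v ^ (q - 1)) := by
  have hfactor : (v ^ q) ^ q - (x * v ^ q - v) = v * (projectivePoly q x).eval (v ^ (q - 1)) := by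
    rw [eval_projectivePoly, pow_succ, ← pow_sub_one_mul Fintype.card_ne_zero v, mul_pow,
      ← pow_sub_one_mul Fintype.card_ne_zero v]
    ring
  rw [mem_vectorialRoots, ← sub_eq_zero, hfactor, mul_eq_zero, or_iff_right hv, IsRoot.def]

theorem isRoot_projectivePoly_iff [IsAlgClosed E] {x y : E} :
    (projectivePoly q x).IsRoot y ↔ ∃ v ∈ vectorialRoots F x, v ≠ 0 ∧ v ^ (q - 1) = y := by
  constructor
  · intro hy
    have hq : q - 1 ≠ 0 := Nat.sub_ne_zero_of_lt Fintype.one_lt_card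
    obtain ⟨v, rfl⟩ := IsAlgClosed.exists_pow_nat_eq y (Nat.pos_of_ne_zero hq)
    have hv : v ≠ 0 := by
      rintro rfl
      simp [IsRoot, eval_projectivePoly, hq] at hy
    exact ⟨v, (mem_vectorialRoots_iff_isRoot hv).2 hy, hv, rfl⟩
  · rintro ⟨v, hv, hv0, rfl⟩
    exact (mem_vectorialRoots_iff_isRoot hv0).1 hv

theorem mem_rootSet_projectivePoly_iff {K : Type*} [Field K] [Algebra K E] [IsAlgClosed E] {x : K}
    {y : E} :
    y ∈ (projectivePoly q x).rootSet E ↔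
      ∃ v ∈ vectorialRoots F (algebraMap K E x), v ≠ 0 ∧ v ^ (q - 1) = y := by
  have hne : projectivePoly q x ≠ 0 :=
    ne_zero_of_natDegree_gt (n := q) (by rw [natDegree_projectivePoly Fintype.card_ne_zero]; lia)
  rw [mem_rootSet_of_ne hne, aeval_def, eval₂_eq_eval_map, map_projectivePoly, ← IsRoot.def,
    isRoot_projectivePoly_iff]

end ProjectivePolynomial

section GroupTheory

theorem nonempty_mulEquiv_of_forall_eq_one_iff {G H H' : Type*} [Group G] [Group H] [Group H']
    {φ : G →* H} {ψ : G →* H'} (hφ : Function.Surjective φ) (hψ : Function.Surjective ψ)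
    (hker : ∀ g, φ g = 1 ↔ ψ g = 1) : Nonempty (H ≃* H') :=
  ⟨(QuotientGroup.quotientKerEquivOfSurjective φ hφ).symm.trans <|
    (QuotientGroup.quotientMulEquivOfEq (SetLike.ext hker)).trans
      (QuotientGroup.quotientKerEquivOfSurjective ψ hψ)⟩

theorem galRestrict_eq_one_iff {K : Type*} [Field K] (f : K[X]) (E : Type*) [Field E] [Algebra K E]
    [Fact (f.map (algebraMap K E)).Splits] (σ : Gal(E/K)) :
    Gal.restrict f E σ = 1 ↔ ∀ y ∈ f.rootSet E, σ y = y := by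
  rw [← (Gal.galActionHom_injective f E).eq_iff, map_one, Equiv.ext_iff]
  simp only [Gal.galActionHom_restrict, Equiv.Perm.coe_one, id_eq, Subtype.ext_iff, Subtype.forall]

theorem toMatrix_mem_center_iff {R M n : Type*} [CommRing R] [IsDomain R] [AddCommGroup M]
    [Module R M] [Fintype n] [DecidableEq n] (b : Module.Basis n R M)
    {A : Matrix.SpecialLinearGroup n R} {g : Module.End R M}
    (hA : (A : Matrix n n R) = LinearMap.toMatrix b b g) :
    A ∈ Subgroup.center (Matrix.SpecialLinearGroup n R) ↔ ∀ v, ∃ a : R, g v = a • v := by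
  rw [Matrix.SpecialLinearGroup.mem_center_iff, hA]
  constructor
  · rintro ⟨r, -, hr⟩ v
    rw [← LinearMap.toMatrix_algebraMap b, (LinearMap.toMatrix b b).injective.eq_iff] at hr
    exact ⟨r, by rw [← hr, Module.algebraMap_end_apply]⟩
  · intro h
    have := Module.Free.of_basis b
    obtain ⟨r, hr⟩ := g.exists_eq_smul_id_of_forall_notLinearIndependent fun v hv ↦ by
      obtain ⟨a, ha⟩ := h v
      have := LinearIndependent.pair_iff.1 hv a (-1) (by simp [ha])
      simp at this
    have hscalar : Matrix.scalar n r = LinearMap.toMatrix b b g := by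
      rw [hr, ← LinearMap.toMatrix_algebraMap b, Algebra.algebraMap_eq_smul_one]
    exact ⟨r, by simpa [hA, ← hscalar] using A.2, hscalar⟩

end GroupTheory

section GaloisRepresentation

variable {F K E : Type*} [Field F] [Fintype F] [Field K] [Field E] [Algebra F E] [Algebra K E]

local notation "q" => Fintype.card F

theorem map_mem_vectorialRoots {x : K} {v : E} (hv : v ∈ vectorialRoots F (algebraMap K E x))
    (σ : Gal(E/K)) : σ v ∈ vectorialRoots F (algebraMap K E x) := by
  rw [mem_vectorialRoots] at hv ⊢
  rw [← map_pow, ← map_pow, hv, map_sub, map_mul, map_pow, AlgEquiv.commutes]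

variable [Algebra F K] [IsScalarTower F K E]

variable (F E) in
/-- The action of the Galois group on the roots of the vectorial polynomial `Y^{q²} - x Y^q + Y`,
which is linear over the field `F` with `q` elements. -/
def galoisRep (x : K) : Gal(E/K) →* Module.End F (vectorialRoots F (algebraMap K E x)) where
  toFun σ := ((σ : E →ₐ[K] E).restrictScalars F).toLinearMap.restrict
    fun _ hv ↦ map_mem_vectorialRoots hv σ
  map_one' := rfl
  map_mul' _ _ := rfl

variable {x : K}

theorem coe_galoisRep_apply (σ : Gal(E/K)) (v : vectorialRoots F (algebraMap K E x)) :
    (galoisRep F E x σ v : E) = σ v :=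
  rfl

theorem det_galoisRep {b : Module.Basis (Fin 2) F (vectorialRoots F (algebraMap K E x))}
    (hb : mooreDet q (b 0 : E) (b 1) = 1) (σ : Gal(E/K)) :
    LinearMap.det (galoisRep F E x σ) = 1 := by
  have h := mooreDet_map_eq_det_smul b (galoisRep F E x σ)
  rw [coe_galoisRep_apply, coe_galoisRep_apply, hb, ← Algebra.algebraMap_eq_smul_one] at h
  have hσ : mooreDet q (σ (b 0)) (σ (b 1)) = 1 := by
    rw [← map_one σ, ← hb]
    exact (map_mooreDet (σ : E →+* E) q _ _).symm
  exact (algebraMap F E).injective (by rw [← h, hσ, map_one])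

/-- The matrices of `galoisRep` in a basis whose Moore determinant is `1`; they lie in `SL₂`
because the Moore determinant is invariant under the Galois group. -/
noncomputable def galoisMatrixRep
    (b : Module.Basis (Fin 2) F (vectorialRoots F (algebraMap K E x)))
    (hb : mooreDet q (b 0 : E) (b 1) = 1) :
    Gal(E/K) →* Matrix.SpecialLinearGroup (Fin 2) F where
  toFun σ := ⟨LinearMap.toMatrix b b (galoisRep F E x σ),
    by rw [LinearMap.det_toMatrix, det_galoisRep hb]⟩
  map_one' := Subtype.ext <|
    (congrArg (LinearMap.toMatrix b b) (map_one (galoisRep F E x))).trans (LinearMap.toMatrix_one b)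
  map_mul' σ τ := Subtype.ext <|
    (congrArg (LinearMap.toMatrix b b) (map_mul (galoisRep F E x) σ τ)).trans
      (LinearMap.toMatrix_mul b _ _)

theorem galoisMatrixRep_mem_center_iff [IsAlgClosed E]
    (b : Module.Basis (Fin 2) F (vectorialRoots F (algebraMap K E x)))
    (hb : mooreDet q (b 0 : E) (b 1) = 1) (σ : Gal(E/K)) :
    galoisMatrixRep b hb σ ∈ Subgroup.center _ ↔
      ∀ y ∈ (projectivePoly q x).rootSet E, σ y = y := by
  rw [toMatrix_mem_center_iff b (g := galoisRep F E x σ) rfl]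
  have hline {v : E} (hv0 : v ≠ 0) : σ (v ^ (q - 1)) = v ^ (q - 1) ↔ ∃ a : F, σ v = a • v := by
    rw [map_pow, pow_card_sub_one_eq_iff_exists_smul hv0 ((map_ne_zero σ).2 hv0)]
  constructor
  · intro h y hy
    obtain ⟨v, hv, hv0, rfl⟩ := mem_rootSet_projectivePoly_iff.1 hy
    obtain ⟨a, ha⟩ := h ⟨v, hv⟩
    exact (hline hv0).2 ⟨a, congrArg Subtype.val ha⟩
  · rintro h ⟨v, hv⟩
    obtain rfl | hv0 := eq_or_ne v 0
    · exact ⟨0, Subtype.ext ((map_zero σ).trans (zero_smul F (0 : E)).symm)⟩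
    · obtain ⟨a, ha⟩ :=
        (hline hv0).1 (h _ (mem_rootSet_projectivePoly_iff.2 ⟨v, hv, hv0, rfl⟩))
      exact ⟨a, Subtype.ext ha⟩

theorem exists_basis_mooreDet_eq_one [IsAlgClosed E] (x : E) :
    ∃ b : Module.Basis (Fin 2) F (vectorialRoots F x), mooreDet q (b 0 : E) (b 1) = 1 := by
  obtain ⟨y, hy⟩ := IsAlgClosed.exists_root (projectivePoly q x) <| degree_ne_of_natDegree_ne <| by
    rw [natDegree_projectivePoly Fintype.card_ne_zero]
    exact Nat.succ_ne_zero q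
  obtain ⟨z, hz, hz0, -⟩ := (isRoot_projectivePoly_iff (F := F)).1 hy
  obtain ⟨w, hzw⟩ := exists_mooreDet_eq_one (Fintype.one_lt_card (α := F)) hz0
  obtain ⟨b, rfl, rfl⟩ :=
    exists_basis_of_mooreDet_eq_one hz (mem_vectorialRoots_of_mooreDet_eq_one hz hz0 hzw) hzw
  exact ⟨b, hzw⟩

theorem galoisMatrixRep_surjective
    (b : Module.Basis (Fin 2) F (vectorialRoots F (algebraMap K E x)))
    (hb : mooreDet q (b 0 : E) (b 1) = 1)
    (htrans : ∀ z' ∈ vectorialRoots F (algebraMap K E x),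
      ∀ w' ∈ vectorialRoots F (algebraMap K E x), mooreDet q z' w' = 1 →
        ∃ σ : Gal(E/K), σ (b 0) = z' ∧ σ (b 1) = w') :
    Function.Surjective (galoisMatrixRep b hb) := by
  intro A
  let g := Matrix.toLin b b (A : Matrix (Fin 2) (Fin 2) F)
  have hdet : mooreDet q (g (b 0) : E) (g (b 1)) = 1 := by
    rw [mooreDet_map_eq_det_smul, hb, LinearMap.det_toLin, A.det_coe, one_smul]
  obtain ⟨σ, hσ₀, hσ₁⟩ := htrans _ (g (b 0)).2 _ (g (b 1)).2 hdet
  have hσ : galoisRep F E x σ = g :=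
    b.ext <| Fin.forall_fin_two.2 ⟨Subtype.ext hσ₀, Subtype.ext hσ₁⟩
  refine ⟨σ, Subtype.ext ?_⟩
  change LinearMap.toMatrix b b (galoisRep F E x σ) = A
  rw [hσ, LinearMap.toMatrix_toLin]

theorem nonempty_gal_projectivePoly_mulEquiv [IsAlgClosed E] [Normal K E]
    {b : Module.Basis (Fin 2) F (vectorialRoots F (algebraMap K E x))}
    {hb : mooreDet q (b 0 : E) (b 1) = 1} (hsurj : Function.Surjective (galoisMatrixRep b hb)) :
    Nonempty ((projectivePoly q x).Gal ≃*
      Matrix.SpecialLinearGroup (Fin 2) F ⧸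
        Subgroup.center (Matrix.SpecialLinearGroup (Fin 2) F)) := by
  have : Fact ((projectivePoly q x).map (algebraMap K E)).Splits := ⟨IsAlgClosed.splits _⟩
  let π := (QuotientGroup.mk' (Subgroup.center _)).comp (galoisMatrixRep b hb)
  refine nonempty_mulEquiv_of_forall_eq_one_iff (Gal.restrict_surjective (projectivePoly q x) E)
    (ψ := π) ((QuotientGroup.mk'_surjective _).comp hsurj) fun σ ↦ ?_
  rw [galRestrict_eq_one_iff, ← galoisMatrixRep_mem_center_iff b hb]
  exact (QuotientGroup.eq_one_iff _).symm

end GaloisRepresentation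

section Irreducibility

theorem natDegree_X_pow_add_C_mul_X_pow_sub_C {R : Type*} [CommRing R] [Nontrivial R] (a c : R)
    {m n : ℕ} (hmn : m < n) : (X ^ n + C a * X ^ m - C c : R[X]).natDegree = n := by
  compute_degree
  · simp [hmn.ne', (Nat.zero_lt_of_lt hmn).ne']
  all_goals simp [hmn.le]

theorem monic_X_pow_add_C_mul_X_pow_sub_C {R : Type*} [CommRing R] (a c : R) {m n : ℕ}
    (hmn : m < n) : (X ^ n + C a * X ^ m - C c : R[X]).Monic := by
  nontriviality R
  rw [Monic, leadingCoeff, natDegree_X_pow_add_C_mul_X_pow_sub_C a c hmn]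
  simp [coeff_X_pow, coeff_C, hmn.ne', (Nat.zero_lt_of_lt hmn).ne']

theorem isEisensteinAt_X_pow_add_C_mul_X_pow_sub_C {R : Type*} [CommRing R] [IsDomain R] {π a : R}
    (hπ : Prime π) (ha : π ∣ a) {m n : ℕ} (hm : m ≠ 0) (hmn : m < n) :
    (X ^ n + C a * X ^ m - C π : R[X]).IsEisensteinAt (Ideal.span {π}) := by
  refine (monic_X_pow_add_C_mul_X_pow_sub_C a π hmn).isEisensteinAt_of_mem_of_notMem
    (Ideal.span_singleton_ne_top hπ.not_isUnit) ?_ ?_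
  · intro i hi
    rw [natDegree_X_pow_add_C_mul_X_pow_sub_C a π hmn] at hi
    rw [Ideal.mem_span_singleton, coeff_sub, coeff_add, coeff_X_pow, if_neg hi.ne, zero_add,
      coeff_C_mul, coeff_C]
    exact dvd_sub (ha.mul_right _) (by split_ifs <;> simp)
  · rw [Ideal.span_singleton_pow, Ideal.mem_span_singleton]
    have hcoeff : (X ^ n + C a * X ^ m - C π : R[X]).coeff 0 = -π := by
      simp [hm.symm, (Nat.zero_lt_of_lt hmn).ne]
    rw [hcoeff, dvd_neg]
    exact fun h ↦ hπ.not_isUnit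
      (isUnit_of_dvd_one ((mul_dvd_mul_iff_left hπ.ne_zero).1 (by rwa [← sq, mul_one])))

theorem irreducible_X_pow_add_C_mul_X_pow_sub_C {R L : Type*} [CommRing R] [IsDomain R]
    [IsIntegrallyClosed R] [Field L] [Algebra R L] [IsFractionRing R L] {π a : R} (hπ : Prime π)
    (ha : π ∣ a) {m n : ℕ} (hm : m ≠ 0) (hmn : m < n) :
    Irreducible (X ^ n + C (algebraMap R L a) * X ^ m - C (algebraMap R L π)) := by
  have hmonic := monic_X_pow_add_C_mul_X_pow_sub_C a π hmn
  have hirr := (isEisensteinAt_X_pow_add_C_mul_X_pow_sub_C hπ ha hm hmn).irreducible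
    ((Ideal.span_singleton_prime hπ.ne_zero).2 hπ) hmonic.isPrimitive
    (by rw [natDegree_X_pow_add_C_mul_X_pow_sub_C a π hmn]; lia)
  simpa using (hmonic.irreducible_iff_irreducible_map_fraction_map (K := L)).1 hirr

end Irreducibility

section Extension

theorem exists_algHom_comp_eq_apply_eq {k L E E' : Type*} [Field k] [Field L] [Field E] [Field E']
    [Algebra k L] [Algebra k E] [Algebra k E'] [IsAlgClosed E'] {i : L →ₐ[k] E}
    (hi : (i : L →+* E).IsIntegral) (j : L →ₐ[k] E') {g : L[X]} (hg : Irreducible g) {w : E}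
    {w' : E'} (hw : g.eval₂ i w = 0) (hw' : g.eval₂ j w' = 0) :
    ∃ σ : E →ₐ[k] E', σ.comp i = j ∧ σ w = w' := by
  let _ := (i : L →+* E).toAlgebra
  let _ := (j : L →+* E').toAlgebra
  have : IsScalarTower k L E := .of_algebraMap_eq' i.comp_algebraMap.symm
  have : IsScalarTower k L E' := .of_algebraMap_eq' j.comp_algebraMap.symm
  have hmin : aeval w' (minpoly L w) = 0 := by
    have hw : aeval w g = 0 := hw
    have hw' : aeval w' g = 0 := hw'
    rw [← minpoly.eq_of_irreducible hg hw, map_mul, hw', zero_mul]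
  obtain ⟨σ, hσ⟩ := IntermediateField.exists_algHom_of_splits_of_aeval
    (fun u ↦ ⟨hi u, IsAlgClosed.splits _⟩) hmin
  exact ⟨σ.restrictScalars k, AlgHom.coe_ringHom_injective σ.comp_algebraMap, hσ⟩

end Extension

section RationalFunctionField

variable {k L : Type*} [Field k] [Field L] [Algebra k L]

theorem exists_algHom_ratFunc_apply_X_eq {z : L} (hz : Transcendental k z) :
    ∃ i : RatFunc k →ₐ[k] L, i RatFunc.X = z :=
  ⟨(IntermediateField.val _).comp (RatFunc.algEquivOfTranscendental z hz).toAlgHom,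
    RatFunc.algEquivOfTranscendental_X z hz⟩

theorem ratFunc_algHom_ext {i j : RatFunc k →ₐ[k] L} (h : i RatFunc.X = j RatFunc.X) : i = j := by
  refine IsLocalization.algHom_ext (nonZeroDivisors k[X]) (Polynomial.algHom_ext ?_)
  simpa [RatFunc.algebraMap_X] using! h

theorem isIntegral_of_apply_eq_apply_X {i j : RatFunc k →ₐ[k] L}
    (hj : (j : RatFunc k →+* L).IsIntegral) {t : RatFunc k} (ht : i t = j RatFunc.X) :
    (i : RatFunc k →+* L).IsIntegral := by
  have htrans : Transcendental k t := fun h ↦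
    RatFunc.transcendental_X ((isAlgebraic_algHom_iff j j.injective).1 (ht ▸ h.algHom i))
  obtain ⟨φ, hφ⟩ := exists_algHom_ratFunc_apply_X_eq htrans
  have hcomp : i.comp φ = j := ratFunc_algHom_ext (by rw [AlgHom.comp_apply, hφ, ht])
  rw [← hcomp, AlgHom.comp_toRingHom] at hj
  exact RingHom.IsIntegral.tower_top _ _ hj

end RationalFunctionField

section Transitivity

/-- The polynomial `U^q + z^q U^{q-1} - z`, whose roots are the inverses of the elements `w` having
Moore determinant `1` with `z`. -/
noncomputable def mooreInvPoly {L : Type*} [CommRing L] (q : ℕ) (z : L) : L[X] :=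
  X ^ q + C (z ^ q) * X ^ (q - 1) - C z

theorem irreducible_mooreInvPoly_ratFuncX {k : Type*} [Field k] {q : ℕ} (hq : 1 < q) :
    Irreducible (mooreInvPoly q (RatFunc.X : RatFunc k)) := by
  have hdvd : (X : k[X]) ∣ X ^ q := dvd_pow_self X (Nat.ne_zero_of_lt hq)
  have hlt : q - 1 < q := Nat.sub_one_lt_of_lt hq
  simpa only [mooreInvPoly, map_pow, RatFunc.algebraMap_X] using
    irreducible_X_pow_add_C_mul_X_pow_sub_C (L := RatFunc k) prime_X hdvd
      (Nat.sub_ne_zero_of_lt hq) hlt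

theorem eval₂_mooreInvPoly_inv_eq_zero {L E : Type*} [Field L] [Field E] {q : ℕ} (hq : q ≠ 0)
    (i : L →+* E) {z : L} {w : E} (hzw : mooreDet q (i z) w = 1) :
    (mooreInvPoly q z).eval₂ i w⁻¹ = 0 := by
  have hw : w ≠ 0 := (ne_zero_of_mooreDet_eq_one hq hzw).2
  rw [mooreDet, ← pow_sub_one_mul hq w] at hzw
  rw [mooreInvPoly, eval₂_sub, eval₂_add, eval₂_mul, eval₂_X_pow, eval₂_X_pow, eval₂_C, eval₂_C,
    map_pow, ← pow_sub_one_mul hq w⁻¹, inv_pow]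
  field_simp
  linear_combination -hzw

variable {F k E : Type*} [Field F] [Fintype F] [Field k] [Field E] [Algebra F E] [Algebra k E]

local notation "q" => Fintype.card F

theorem eq_div_of_mem_vectorialRoots {x z : E} (hz : z ∈ vectorialRoots F x) (hz0 : z ≠ 0) :
    x = ((z ^ q) ^ q + z) / z ^ q := by
  rw [eq_div_iff (pow_ne_zero _ hz0), mem_vectorialRoots.1 hz, sub_add_cancel]

theorem transcendental_of_mem_vectorialRoots {x z : E} (hx : Transcendental k x)
    (hz : z ∈ vectorialRoots F x) (hz0 : z ≠ 0) : Transcendental k z := by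
  intro h
  refine hx ?_
  rw [eq_div_of_mem_vectorialRoots hz hz0, div_eq_mul_inv]
  exact (((h.pow q).pow q).add h).mul (h.pow q).inv

variable [Algebra (RatFunc k) E] [IsScalarTower k (RatFunc k) E]
  [Algebra.IsAlgebraic (RatFunc k) E]

theorem exists_isIntegral_algHom_apply_X_eq {z : E}
    (hz : z ∈ vectorialRoots F (algebraMap (RatFunc k) E RatFunc.X)) (hz0 : z ≠ 0) :
    ∃ i : RatFunc k →ₐ[k] E, (i : RatFunc k →+* E).IsIntegral ∧ i RatFunc.X = z := by
  have hx : Transcendental k (algebraMap (RatFunc k) E RatFunc.X) :=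
    (transcendental_algebraMap_iff (algebraMap (RatFunc k) E).injective).2 RatFunc.transcendental_X
  obtain ⟨i, rfl⟩ :=
    exists_algHom_ratFunc_apply_X_eq (transcendental_of_mem_vectorialRoots hx hz hz0)
  refine ⟨i, isIntegral_of_apply_eq_apply_X (j := IsScalarTower.toAlgHom k (RatFunc k) E)
    (algebraMap_isIntegral_iff.2 inferInstance)
    (t := ((RatFunc.X ^ q) ^ q + RatFunc.X) / RatFunc.X ^ q) ?_, rfl⟩
  rw [IsScalarTower.coe_toAlgHom', eq_div_of_mem_vectorialRoots hz hz0]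
  simp only [map_div₀, map_add, map_pow]

theorem map_eq_of_map_mem_vectorialRoots (σ : E →+* E) {x z : E} (hz : z ∈ vectorialRoots F x)
    (hz0 : z ≠ 0) (hσz : σ z ∈ vectorialRoots F x) : σ x = x := by
  calc σ x = ((σ z ^ q) ^ q + σ z) / σ z ^ q := by
        rw [eq_div_of_mem_vectorialRoots hz hz0]
        simp only [map_div₀, map_add, map_pow]
    _ = x := (eq_div_of_mem_vectorialRoots hσz ((map_ne_zero σ).2 hz0)).symm

theorem exists_gal_apply_eq [IsAlgClosed E] {z w z' w' : E}
    (hz : z ∈ vectorialRoots F (algebraMap (RatFunc k) E RatFunc.X))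
    (hz' : z' ∈ vectorialRoots F (algebraMap (RatFunc k) E RatFunc.X))
    (hzw : mooreDet q z w = 1) (hzw' : mooreDet q z' w' = 1) :
    ∃ σ : Gal(E/RatFunc k), σ z = z' ∧ σ w = w' := by
  have hq : q ≠ 0 := Fintype.card_ne_zero
  have hz0 : z ≠ 0 := (ne_zero_of_mooreDet_eq_one hq hzw).1
  have hz0' : z' ≠ 0 := (ne_zero_of_mooreDet_eq_one hq hzw').1
  obtain ⟨i, hi, rfl⟩ := exists_isIntegral_algHom_apply_X_eq hz hz0
  obtain ⟨i', -, rfl⟩ := exists_isIntegral_algHom_apply_X_eq hz' hz0'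
  obtain ⟨σ, hσ, hσw⟩ := exists_algHom_comp_eq_apply_eq hi i'
    (irreducible_mooreInvPoly_ratFuncX (Fintype.one_lt_card (α := F)))
    (eval₂_mooreInvPoly_inv_eq_zero hq (i : RatFunc k →+* E) hzw)
    (eval₂_mooreInvPoly_inv_eq_zero hq (i' : RatFunc k →+* E) hzw')
  have hσz : σ (i RatFunc.X) = i' RatFunc.X := DFunLike.congr_fun hσ RatFunc.X
  let j := IsScalarTower.toAlgHom k (RatFunc k) E
  have hσj : σ.comp j = j := ratFunc_algHom_ext <|
    map_eq_of_map_mem_vectorialRoots (σ : E →+* E) hz hz0 (hσz.symm ▸ hz')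
  let τ : E →ₐ[RatFunc k] E := { σ with commutes' := DFunLike.congr_fun hσj }
  exact ⟨.ofBijective τ (Algebra.IsAlgebraic.algHom_bijective τ), hσz,
    inv_injective ((map_inv₀ σ w).symm.trans hσw)⟩

end Transitivity

theorem stmt_0_general {F : Type*} [Field F] [Fintype F] (k : Type*) [Field k] [Algebra F k] :
    Nonempty ((X ^ (Fintype.card F + 1) - C RatFunc.X * X + 1 : (RatFunc k)[X]).Gal ≃*
      Matrix.SpecialLinearGroup (Fin 2) F ⧸
        Subgroup.center (Matrix.SpecialLinearGroup (Fin 2) F)) := by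
  let E := AlgebraicClosure (RatFunc k)
  obtain ⟨b, hb⟩ := exists_basis_mooreDet_eq_one (F := F) (algebraMap (RatFunc k) E RatFunc.X)
  have hsurj : Function.Surjective (galoisMatrixRep b hb) :=
    galoisMatrixRep_surjective b hb fun z' hz' w' _ hzw' ↦
      exists_gal_apply_eq (b 0).2 hz' hb hzw'
  exact nonempty_gal_projectivePoly_mulEquiv hsurj

/-- Abhyankar: for `n = q + 1` with `q = p^e`, the Galois group of
`Y^n - X·Y + 1` over `k(X)` (`k` algebraically closed of characteristic `p`)
is isomorphic to `PSL(2, q)`, the quotient of `SL(2, F_q)` by its center. -/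
theorem stmt_0 (p : ℕ) [Fact p.Prime] (e : ℕ) (he : 0 < e)
    (k : Type*) [Field k] [IsAlgClosed k] [CharP k p]
    (q n : ℕ) (hq : q = p ^ e) (hn : n = q + 1)
    (f : Polynomial (RatFunc k)) (hf : f = X ^ n - C RatFunc.X * X + 1) :
    Nonempty (f.Gal ≃*
      Matrix.SpecialLinearGroup (Fin 2) (GaloisField p e) ⧸
        Subgroup.center (Matrix.SpecialLinearGroup (Fin 2) (GaloisField p e))) := by
  let _ : Algebra (ZMod p) k := ZMod.algebra k p
  let _ : Algebra (GaloisField p e) k :=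
    (IsAlgClosed.lift : GaloisField p e →ₐ[ZMod p] k).toRingHom.toAlgebra
  let _ : Fintype (GaloisField p e) := .ofFinite _
  have hcard : Fintype.card (GaloisField p e) = q := by
    rw [hq, ← GaloisField.card p e he.ne', Nat.card_eq_fintype_card]
  rw [hf, hn, ← hcard]
  exact stmt_0_general k
end

section
/- Let k be an algebraically closed field of characteristic 7, let a be a nonzero element of k, and let s be a positive integer. Then the Galois group of the polynomial Y^9 - a·X^s·Y^2 + 1 over the rational function field k(X) is isomorphic, as a group, to PSL(2,8), i.e., to the quotient of SL(2, F_8) by its center, where F_8 is the field with 8 elements. -/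
open Polynomial

/-!
Let `G` be the Galois group of `Y ^ 9 - t * Y ^ 2 + 1`, `t = a * X ^ s`, acting on the nine roots.

* `G` is transitive: as a polynomial in `X`, the trinomial is Eisenstein at `Y + 1`.
* `7` divides `|G|`: at a pole of `t` of order prime to `7`, some root `y` has `v y ^ 7 = v t`, so
  the ramification index is divisible by `7`. Pulling back along Frobenius removes the factors `7`
  from `s`. A 7-cycle on nine points then makes `G` triply transitive.
* `|G| ≤ 504 = 9 * 8 * 7`: let `ζ ^ 3 = 2` and `x ^ 7 - x = ζ / y ^ 3` for a root `y`, and choose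
  square roots `h k` of the translates `x - k`. The other roots are rational functions of `y` and
  `R = ∑ k, h k ^ 4 / P k`, where `P k` is the product of `h` over the complement of a line of the
  Fano plane; the `P k` generate an extension of `K(x, y)` of degree at most `8`.

So `G` is sharply triply transitive. The stabilizer of a point has a regular normal subgroup, on
which commuting conjugations define a field with eight elements; in this coordinate the nine points
become the projective line, and `G` becomes `PGL (2, 8) = PSL (2, 8)`.
-/

section FanoPlane

variable {R : Type*} [CommRing R]

/-- The product of `h` over the line `{k + 3, k + 5, k + 6}` of the Fano plane with point set
`ZMod 7`. -/
def fanoLineProd (h : ZMod 7 → R) (k : ZMod 7) : R := h (k + 3) * h (k + 5) * h (k + 6)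

/-- The product of `h` over the complement `{k, k + 1, k + 2, k + 4}` of a line of the Fano
plane. -/
def fanoComplProd (h : ZMod 7 → R) (k : ZMod 7) : R := h k * h (k + 1) * h (k + 2) * h (k + 4)

theorem sum_zmod_seven {M : Type*} [AddCommMonoid M] (f : ZMod 7 → M) :
    ∑ k, f k = f 0 + f 1 + f 2 + f 3 + f 4 + f 5 + f 6 :=
  Fin.sum_univ_seven f

theorem prod_zmod_seven (f : ZMod 7 → R) :
    ∏ k, f k = f 0 * f 1 * f 2 * f 3 * f 4 * f 5 * f 6 :=
  Fin.prod_univ_seven f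

/-- Two lines meet in one point, and their symmetric difference is the complement of the third
line through that point. -/
theorem sum_mul_fanoLineProd_mul_sum (h b u : ZMod 7 → R) :
    (∑ k, b k * fanoLineProd h k) * ∑ k, u k * fanoLineProd h k =
      ∑ k, b k * u k * fanoLineProd h k ^ 2 +
      ∑ k, ((b (k + 4) * u (k + 5) + b (k + 5) * u (k + 4)) * h (k + 3) ^ 2 +
        (b (k + 2) * u (k + 6) + b (k + 6) * u (k + 2)) * h (k + 5) ^ 2 +
        (b (k + 1) * u (k + 3) + b (k + 3) * u (k + 1)) * h (k + 6) ^ 2) * fanoComplProd h k := by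
  simp only [sum_zmod_seven, fanoLineProd, fanoComplProd]
  reduce_mod_char!
  ring

theorem fanoLineProd_mul_fanoComplProd (h : ZMod 7 → R) (k : ZMod 7) :
    fanoLineProd h k * fanoComplProd h k = ∏ i, h i := by
  rw [← Equiv.prod_comp (Equiv.addLeft k), prod_zmod_seven]
  simp only [Equiv.coe_addLeft, fanoLineProd, fanoComplProd, add_zero]
  ring

end FanoPlane

section Octic

variable {R : Type*} [CommRing R]

/-- For `X = h ^ 2` in characteristic `7`, the coefficient of `fanoLineProd h k` in `S ^ 7 - S`,
where `S = ∑ k, h k ^ 4 * fanoLineProd h k`. -/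
def fanoCoeff (X : ZMod 7 → R) (k : ZMod 7) : R := X k ^ 14 * fanoLineProd X k ^ 3 - X k ^ 2

theorem fanoLineProd_pow (h : ZMod 7 → R) (n : ℕ) (k : ZMod 7) :
    fanoLineProd (h ^ n) k = fanoLineProd h k ^ n := by
  simp only [fanoLineProd, Pi.pow_apply, mul_pow]

variable [CharP R 7]

section Translates

variable {X : ZMod 7 → R} (hX : ∀ k, X k = X 0 - (k.cast : R))
include hX

theorem apply_add_of_translates (k j : ZMod 7) :
    X (k + j) = X k - ZMod.castHom dvd_rfl R j := by
  rw [hX, hX k, ZMod.castHom_apply, ZMod.cast_add dvd_rfl, sub_sub]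

theorem prod_translates (k : ZMod 7) : ∏ j, X j = X k ^ 7 - X k := by
  rw [← Equiv.prod_comp (Equiv.addLeft k), prod_zmod_seven]
  simp only [Equiv.coe_addLeft, apply_add_of_translates hX k, map_zero, map_one, map_ofNat]
  ring_nf
  reduce_mod_char!
  ring

theorem sum_fanoCoeff_mul_fanoLineProd :
    ∑ k, X k ^ 2 * fanoCoeff X k * fanoLineProd X k = ∏ k, X k := by
  rw [prod_translates hX 0, ← sub_eq_zero]
  have hX₀ (j : ZMod 7) : X j = X 0 - ZMod.castHom dvd_rfl R j := hX j
  simp only [sum_zmod_seven, fanoCoeff, fanoLineProd]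
  reduce_mod_char
  simp only [hX₀ 1, hX₀ 2, hX₀ 3, hX₀ 4, hX₀ 5, hX₀ 6, map_one, map_ofNat]
  generalize X 0 = x
  ring_nf
  reduce_mod_char!

theorem fanoCoeff_relation (k : ZMod 7) :
    (X (k + 4) ^ 2 * fanoCoeff X (k + 5) + X (k + 5) ^ 2 * fanoCoeff X (k + 4)) * X (k + 3) +
      (X (k + 2) ^ 2 * fanoCoeff X (k + 6) + X (k + 6) ^ 2 * fanoCoeff X (k + 2)) * X (k + 5) +
      (X (k + 1) ^ 2 * fanoCoeff X (k + 3) + X (k + 3) ^ 2 * fanoCoeff X (k + 1)) * X (k + 6) =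
    -(((∏ j, X j) ^ 3 + 2) * (X k ^ 2 * fanoLineProd X k)) := by
  rw [prod_translates hX k, ← sub_eq_zero]
  simp only [fanoCoeff, fanoLineProd, add_assoc k]
  reduce_mod_char
  simp only [apply_add_of_translates hX k, map_one, map_ofNat]
  generalize X k = x
  ring_nf
  reduce_mod_char!

end Translates

variable {h : ZMod 7 → R} (hh : ∀ k, h k ^ 2 = h 0 ^ 2 - (k.cast : R))
include hh

theorem fano_octic :
    (∑ k, h k ^ 4 * fanoLineProd h k) ^ 8 + (∏ k, h k) ^ 7 * ∑ k, h k ^ 4 * fanoLineProd h k =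
      (∑ k, h k ^ 4 * fanoLineProd h k - ∏ k, h k) ^ 2 := by
  set S := ∑ k, h k ^ 4 * fanoLineProd h k with hS
  set H := ∏ k, h k with hH
  have hS_sq : S = ∑ k, (h ^ 2) k ^ 2 * fanoLineProd h k := by
    simp only [hS, Pi.pow_apply, ← pow_mul]
  have : Fact (Nat.Prime 7) := ⟨by norm_num⟩
  have hH_sq : H ^ 2 = ∏ k, (h ^ 2) k := (Finset.prod_pow _ _ _).symm
  have hfrob : S ^ 7 - S = ∑ k, fanoCoeff (h ^ 2) k * fanoLineProd h k := by
    rw [hS, sum_pow_char, ← Finset.sum_sub_distrib]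
    refine Finset.sum_congr rfl fun k _ ↦ ?_
    rw [fanoCoeff, fanoLineProd_pow, Pi.pow_apply]
    ring
  have hprod : S * (S ^ 7 - S) = H ^ 2 - (H ^ 6 + 2) * (H * S) := by
    rw [hfrob, hS_sq, sum_mul_fanoLineProd_mul_sum]
    simp only [← Pi.pow_apply h 2, fanoCoeff_relation (X := h ^ 2) hh, ← fanoLineProd_pow,
      sum_fanoCoeff_mul_fanoLineProd (X := h ^ 2) hh, ← hH_sq, hH, Finset.mul_sum]
    rw [sub_eq_add_neg, ← Finset.sum_neg_distrib]
    refine congrArg _ (Finset.sum_congr rfl fun k _ ↦ ?_)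
    rw [fanoLineProd_pow]
    linear_combination -(((∏ k, h k) ^ 6 + 2) * (h ^ 2) k ^ 2 * fanoLineProd h k) *
      fanoLineProd_mul_fanoComplProd h k
  linear_combination hprod

end Octic

section FanoSum

variable {F : Type*} [Field F]

/-- The function `R = ∑ k, h k ^ 4 / (h k * h (k + 1) * h (k + 2) * h (k + 4))` of square roots
`h k` of the translates `x - k`; the roots of `Y ^ 9 - t * Y ^ 2 + 1` other than `y` are
`y * (R - 1) / (R + 1)` for the various choices of the square roots. -/
def fanoSum (h : ZMod 7 → F) : F := ∑ k, h k ^ 4 / fanoComplProd h k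

theorem fanoSum_mul_prod {h : ZMod 7 → F} (h₀ : ∀ k, h k ≠ 0) :
    fanoSum h * ∏ k, h k = ∑ k, h k ^ 4 * fanoLineProd h k := by
  rw [fanoSum, Finset.sum_mul]
  refine Finset.sum_congr rfl fun k _ ↦ ?_
  have hk : fanoComplProd h k ≠ 0 := by simp only [fanoComplProd, ne_eq, mul_eq_zero, h₀, or_self,
    not_false_eq_true]
  rw [← fanoLineProd_mul_fanoComplProd h k]
  field_simp

theorem fanoSum_mem {S : Type*} [SetLike S F] [SubfieldClass S F] {E : S} {h g : ZMod 7 → F}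
    {m : ZMod 7} (hg : ∀ k, g k ^ 2 = h (k + m) ^ 2) (hE : ∀ k, h k ^ 2 ∈ E)
    (hE' : ∀ k, fanoComplProd h k ∈ E) : fanoSum g ∈ E := by
  refine sum_mem fun k _ ↦ div_mem ?_ ?_
  · rw [show g k ^ 4 = (h (k + m) ^ 2) ^ 2 by rw [← hg]; ring]
    exact pow_mem (hE _) 2
  · have hsq : fanoComplProd g k ^ 2 = fanoComplProd h (k + m) ^ 2 := by
      simp only [fanoComplProd, mul_pow, hg, add_right_comm k m]
    rcases sq_eq_sq_iff_eq_or_eq_neg.mp hsq with h' | h' <;> rw [h']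
    exacts [hE' _, neg_mem (hE' _)]

theorem fanoComplProd_mem {S : Type*} [SetLike S F] [SubfieldClass S F] {E : S} {h : ZMod 7 → F}
    (h₀ : ∀ k, h k ≠ 0) (hE : ∀ k, h k ^ 2 ∈ E) (hE₀ : fanoComplProd h 0 ∈ E)
    (hE₁ : fanoComplProd h 1 ∈ E) (hE₂ : fanoComplProd h 2 ∈ E) (k : ZMod 7) :
    fanoComplProd h k ∈ E := by
  have hstep (i : ZMod 7) (hi : fanoComplProd h i ∈ E) (hi' : fanoComplProd h (i + 1) ∈ E) :
      fanoComplProd h (i + 3) ∈ E := by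
    have : fanoComplProd h (i + 3) = h i ^ 2 * h (i + 1) ^ 2 * h (i + 2) ^ 2 * h (i + 3) ^ 2 *
        h (i + 4) ^ 2 * h (i + 5) ^ 2 / (fanoComplProd h i * fanoComplProd h (i + 1)) := by
      rw [eq_div_iff (by simp [fanoComplProd, h₀])]
      simp only [fanoComplProd, add_assoc i]
      reduce_mod_char
      ring
    rw [this]
    exact div_mem (mul_mem (mul_mem (mul_mem (mul_mem (mul_mem (hE _) (hE _)) (hE _)) (hE _))
      (hE _)) (hE _)) (mul_mem hi hi')
  have hE₃ := hstep 0 hE₀ hE₁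
  have hE₄ := hstep 1 hE₁ hE₂
  have hE₅ := hstep 2 hE₂ hE₃
  have hE₆ := hstep 3 hE₃ hE₄
  fin_cases k
  exacts [hE₀, hE₁, hE₂, hE₃, hE₄, hE₅, hE₆]

variable [CharP F 7] {h : ZMod 7 → F} (hh : ∀ k, h k ^ 2 = h 0 ^ 2 - (k.cast : F))
  (h₀ : ∀ k, h k ≠ 0)
include hh h₀

theorem prod_pow_six_mul_fanoSum :
    (∏ k, h k) ^ 6 * (fanoSum h ^ 8 + fanoSum h) = (fanoSum h - 1) ^ 2 := by
  have hH : ∏ k, h k ≠ 0 := Finset.prod_ne_zero_iff.mpr fun k _ ↦ h₀ k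
  have hoctic := fano_octic hh
  rw [← fanoSum_mul_prod h₀] at hoctic
  refine mul_right_cancel₀ (pow_ne_zero 2 hH) ?_
  linear_combination hoctic

theorem fanoSum_add_one_ne_zero : fanoSum h + 1 ≠ 0 := fun hR ↦ by
  have hrel := prod_pow_six_mul_fanoSum hh h₀
  rw [eq_neg_of_add_eq_zero_left hR] at hrel
  have h7 : (7 : F) = 0 := CharP.cast_eq_zero F 7
  exact one_ne_zero (α := F) (by linear_combination -2 * hrel - h7)

theorem trinomial_root_mul_fanoSum {t y : F} (hy : y ^ 9 - t * y ^ 2 + 1 = 0)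
    (hyh : y ^ 9 * (∏ k, h k) ^ 6 = 2) :
    (y * ((fanoSum h - 1) / (fanoSum h + 1))) ^ 9 -
      t * (y * ((fanoSum h - 1) / (fanoSum h + 1))) ^ 2 + 1 = 0 := by
  have : Fact (Nat.Prime 7) := ⟨by norm_num⟩
  have hrel := prod_pow_six_mul_fanoSum hh h₀
  have hH : (∏ k, h k) ^ 6 ≠ 0 := pow_ne_zero _ <| Finset.prod_ne_zero_iff.mpr fun k _ ↦ h₀ k
  have hR₁ := fanoSum_add_one_ne_zero hh h₀
  generalize fanoSum h = R at *
  have hadd : (R + 1) ^ 7 = R ^ 7 + 1 := by rw [add_pow_char, one_pow]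
  have hsub : (R - 1) ^ 7 = R ^ 7 - 1 := by rw [sub_pow_char, one_pow]
  field_simp
  refine mul_left_cancel₀ hH ?_
  rw [show (R + 1) ^ 9 = (R + 1) ^ 2 * (R + 1) ^ 7 by ring, hadd, hsub]
  linear_combination -2 * (R - 1) ^ 2 * hyh + 4 * hrel +
    (∏ k, h k) ^ 6 * (R - 1) ^ 2 * (R ^ 7 + 1) * hy

end FanoSum

section DegreeBound

open IntermediateField

variable {K Ω : Type*} [Field K] [Field Ω] [Algebra K Ω]

theorem exists_le_mem_rank_le {E : IntermediateField K Ω} {d n : ℕ} (hE : Module.rank K E ≤ d)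
    {x : Ω} {p : E[X]} (hp : p.Monic) (hpn : p.natDegree ≤ n) (hx : aeval x p = 0) :
    ∃ E' : IntermediateField K Ω, E ≤ E' ∧ x ∈ E' ∧ Module.rank K E' ≤ (d * n : ℕ) := by
  have hint : IsIntegral E x := ⟨p, hp, hx⟩
  have := adjoin.finiteDimensional hint
  refine ⟨E⟮x⟯.restrictScalars K, fun z hz ↦ E⟮x⟯.algebraMap_mem ⟨z, hz⟩,
    mem_adjoin_simple_self E x, ?_⟩
  have hdeg : Module.rank E E⟮x⟯ ≤ n := by
    rw [← Module.finrank_eq_rank, adjoin.finrank hint]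
    exact_mod_cast (natDegree_le_of_dvd (minpoly.dvd E x hx) hp.ne_zero).trans hpn
  have : Module.Free E E⟮x⟯ := Module.Free.of_divisionRing _ _
  rw [Nat.cast_mul]
  exact (rank_mul_rank K E E⟮x⟯).symm.trans_le (mul_le_mul' hE hdeg)

theorem exists_le_mem_rank_le_of_pow_mem {E : IntermediateField K Ω} {d n : ℕ} (hn : n ≠ 0)
    (hE : Module.rank K E ≤ d) {x : Ω} (hx : x ^ n ∈ E) :
    ∃ E' : IntermediateField K Ω, E ≤ E' ∧ x ∈ E' ∧ Module.rank K E' ≤ (d * n : ℕ) :=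
  exists_le_mem_rank_le hE (monic_X_pow_sub_C ⟨x ^ n, hx⟩ hn) natDegree_X_pow_sub_C.le
    (by simp)

theorem rootSet_subset_of_isMultiplyPretransitive_two [Normal K Ω] {f : K[X]}
    [Fact ((f.map (algebraMap K Ω)).Splits)]
    [MulAction.IsMultiplyPretransitive f.Gal (f.rootSet Ω) 2] {E : IntermediateField K Ω} {y z : Ω}
    (hy : y ∈ f.rootSet Ω) (hz : z ∈ f.rootSet Ω) (hyz : y ≠ z) (hyE : y ∈ E)
    (hzE : ∀ σ : Gal(Ω/K), σ y = y → σ z ∈ E) : f.rootSet Ω ⊆ E := fun r hr ↦ by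
  rcases eq_or_ne y r with rfl | hyr
  · exact hyE
  obtain ⟨g, hgy, hgz⟩ := MulAction.is_two_pretransitive_iff.mp
    ‹MulAction.IsMultiplyPretransitive f.Gal (f.rootSet Ω) 2›
    (show (⟨y, hy⟩ : f.rootSet Ω) ≠ ⟨z, hz⟩ from Subtype.coe_ne_coe.mp hyz)
    (show (⟨y, hy⟩ : f.rootSet Ω) ≠ ⟨r, hr⟩ from Subtype.coe_ne_coe.mp hyr)
  obtain ⟨σ, rfl⟩ := Gal.restrict_surjective f Ω g
  have hσy := congrArg Subtype.val hgy
  have hσz := congrArg Subtype.val hgz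
  rw [Gal.restrict_smul] at hσy hσz
  exact (show σ z = r from hσz) ▸ hzE σ hσy

theorem card_gal_le_of_rootSet_subset {f : K[X]} (hf : f.Separable)
    (hsplit : (f.map (algebraMap K Ω)).Splits) {E : IntermediateField K Ω} (hE : f.rootSet Ω ⊆ E)
    {d : ℕ} (hd : Module.rank K E ≤ d) : Nat.card f.Gal ≤ d := by
  have hfin : Module.rank K E < Cardinal.aleph0 := hd.trans_lt (Cardinal.natCast_lt_aleph0)
  have : FiniteDimensional K E := Module.rank_lt_aleph0_iff.mp hfin
  rw [Gal.card_of_separable hf]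
  have hsplitE : (f.map (algebraMap K E)).Splits := splits_of_splits hsplit hE
  refine (LinearMap.finrank_le_finrank_of_injective
    (f := (SplittingField.lift f hsplitE).toLinearMap)
    (SplittingField.lift f hsplitE).injective).trans ?_
  exact Module.finrank_le_of_rank_le hd

theorem exists_eq_add_cast_of_pow_sub_eq {p : ℕ} [Fact p.Prime] [CharP Ω p] {a b : Ω}
    (hab : a ^ p - a = b ^ p - b) : ∃ m : ZMod p, a = b + (m.cast : Ω) := by
  have hpow : (a - b) ^ p = a - b := by rw [sub_pow_char]; linear_combination hab
  obtain ⟨n, hn⟩ := (mem_bot_iff_intCast p Ω).mp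
    ((Subfield.mem_bot_iff_pow_eq_self Ω p).mpr hpow)
  exact ⟨n, by rw [ZMod.cast_intCast dvd_rfl, hn]; ring⟩

end DegreeBound

section Trinomial

/-- Abhyankar's trinomial `Y ^ 9 - t * Y ^ 2 + 1`. -/
noncomputable def abhyankarTrinomial {K : Type*} [CommRing K] (t : K) : K[X] :=
  X ^ 9 - C t * X ^ 2 + 1

theorem monic_abhyankarTrinomial {R : Type*} [CommRing R] (t : R) :
    (abhyankarTrinomial t).Monic := by
  unfold abhyankarTrinomial; monicity!

theorem map_abhyankarTrinomial {R S : Type*} [CommRing R] [CommRing S] (φ : R →+* S) (t : R) :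
    (abhyankarTrinomial t).map φ = abhyankarTrinomial (φ t) := by
  simp [abhyankarTrinomial]

variable {K : Type*} [Field K]

theorem natDegree_abhyankarTrinomial (t : K) : (abhyankarTrinomial t).natDegree = 9 := by
  unfold abhyankarTrinomial; compute_degree!

theorem aeval_abhyankarTrinomial {L : Type*} [Field L] [Algebra K L] (t : K) (y : L) :
    aeval y (abhyankarTrinomial t) = y ^ 9 - algebraMap K L t * y ^ 2 + 1 := by
  simp [abhyankarTrinomial]

theorem separable_abhyankarTrinomial [CharP K 7] (t : K) : (abhyankarTrinomial t).Separable := by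
  have h7 : (7 : K[X]) = 0 := CharP.cast_eq_zero K[X] 7
  refine ⟨1, 3 * X, ?_⟩
  simp only [abhyankarTrinomial, derivative_add, derivative_sub, derivative_mul, derivative_X_pow,
    derivative_C, derivative_one, Nat.cast_ofNat, map_ofNat]
  linear_combination (4 * X ^ 9 - C t * X ^ 2) * h7

theorem exists_rank_le_fanoComplProd_mem {Ω : Type*} [Field Ω] [Algebra K Ω] [CharP Ω 7]
    {t ζ : K} {x y : Ω} (hy : aeval y (abhyankarTrinomial t) = 0)
    (hx : x ^ 7 - x = algebraMap K Ω ζ / y ^ 3) {h : ZMod 7 → Ω}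
    (hh : ∀ k, h k ^ 2 = x - (k.cast : Ω)) (h₀ : ∀ k, h k ≠ 0) :
    ∃ E : IntermediateField K Ω, y ∈ E ∧ (∀ k, h k ^ 2 ∈ E) ∧ (∀ k, fanoComplProd h k ∈ E) ∧
      Module.rank K E ≤ (504 : ℕ) := by
  have hsq {E : IntermediateField K Ω} (hxE : x ∈ E) (k : ZMod 7) : h k ^ 2 ∈ E := by
    rw [hh, ← ZMod.natCast_zmod_val k, ZMod.cast_natCast dvd_rfl]
    exact sub_mem hxE (natCast_mem E _)
  have hwsq {E : IntermediateField K Ω} (hxE : x ∈ E) (k : ZMod 7) :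
      fanoComplProd h k ^ 2 ∈ E := by
    simp only [fanoComplProd, mul_pow]
    exact mul_mem (mul_mem (mul_mem (hsq hxE _) (hsq hxE _)) (hsq hxE _)) (hsq hxE _)
  obtain ⟨E₁, -, hyE₁, hE₁⟩ := exists_le_mem_rank_le (E := (⊥ : IntermediateField K Ω)) (d := 1)
    (by rw [IntermediateField.rank_bot, Nat.cast_one])
    (p := (abhyankarTrinomial t).map (algebraMap K _)) (n := 9) ((monic_abhyankarTrinomial t).map _)
    (by rw [natDegree_map, natDegree_abhyankarTrinomial]) ((aeval_map_algebraMap _ _ _).trans hy)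
  let c : E₁ := algebraMap K E₁ ζ / ⟨y, hyE₁⟩ ^ 3
  obtain ⟨E₂, h₁₂, hxE₂, hE₂⟩ := exists_le_mem_rank_le hE₁ (x := x) (p := X ^ 7 - X - C c) (n := 7)
    (by monicity!) (by compute_degree!)
    (by rw [map_sub, map_sub, map_pow, aeval_X, aeval_C, hx]; exact sub_self _)
  obtain ⟨E₃, h₂₃, hE₃w, hE₃⟩ := exists_le_mem_rank_le_of_pow_mem two_ne_zero hE₂ (hwsq hxE₂ 0)
  obtain ⟨E₄, h₃₄, hE₄w, hE₄⟩ :=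
    exists_le_mem_rank_le_of_pow_mem two_ne_zero hE₃ (hwsq (h₂₃ hxE₂) 1)
  obtain ⟨E₅, h₄₅, hE₅w, hE₅⟩ :=
    exists_le_mem_rank_le_of_pow_mem two_ne_zero hE₄ (hwsq (h₃₄ (h₂₃ hxE₂)) 2)
  have hsqE := hsq (h₄₅ (h₃₄ (h₂₃ hxE₂)))
  exact ⟨E₅, h₄₅ (h₃₄ (h₂₃ (h₁₂ hyE₁))), hsqE,
    fanoComplProd_mem h₀ hsqE (h₄₅ (h₃₄ hE₃w)) (h₄₅ hE₄w) hE₅w, hE₅⟩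

theorem exists_sqrt_translates {Ω : Type*} [Field Ω] [IsAlgClosed Ω] [CharP Ω 7] (c : Ω) :
    ∃ (x : Ω) (h : ZMod 7 → Ω), x ^ 7 - x = c ∧ (∀ k, h k ^ 2 = x - (k.cast : Ω)) ∧
      (∏ k, h k) ^ 2 = c := by
  obtain ⟨x, hx⟩ := IsAlgClosed.exists_root (X ^ 7 - X - C c : Polynomial Ω)
    (by rw [show (X ^ 7 - X - C c : Polynomial Ω).degree = 7 by compute_degree!]; norm_num)
  replace hx : x ^ 7 - x = c := by simpa [sub_eq_zero] using hx
  choose h hh using fun k : ZMod 7 ↦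
    IsAlgClosed.exists_pow_nat_eq (x - (k.cast : Ω)) (n := 2) two_pos
  have hx₀ : h 0 ^ 2 = x := by rw [hh, ZMod.cast_zero, sub_zero]
  refine ⟨x, h, hx, hh, ?_⟩
  rw [← Finset.prod_pow, ← hx, ← hx₀]
  exact prod_translates (X := fun k ↦ h k ^ 2) (fun k ↦ by rw [hx₀, hh]) 0

theorem map_fanoSum_mem {Ω : Type*} [Field Ω] [CharP Ω 7] {S : Type*} [SetLike S Ω]
    [SubfieldClass S Ω] {E : S} {x : Ω} {h : ZMod 7 → Ω} (hh : ∀ k, h k ^ 2 = x - (k.cast : Ω))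
    (hE : ∀ k, h k ^ 2 ∈ E) (hE' : ∀ k, fanoComplProd h k ∈ E) (σ : Ω →+* Ω)
    (hσ : σ (x ^ 7 - x) = x ^ 7 - x) : σ (fanoSum h) ∈ E := by
  have : Fact (Nat.Prime 7) := ⟨by norm_num⟩
  obtain ⟨m, hm⟩ := exists_eq_add_cast_of_pow_sub_eq (p := 7) (a := σ x) (b := x)
    (by rw [← hσ, map_sub, map_pow])
  have hmap : σ (fanoSum h) = fanoSum fun k ↦ σ (h k) := by
    simp only [fanoSum, fanoComplProd, map_sum, map_div₀, map_mul, map_pow]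
  rw [hmap]
  refine fanoSum_mem (m := -m) (fun k ↦ ?_) hE hE'
  have hσk : σ (k.cast : Ω) = k.cast := by
    rw [← ZMod.natCast_zmod_val k, ZMod.cast_natCast dvd_rfl, map_natCast]
  rw [← map_pow, hh, map_sub, hσk, hm, hh, ZMod.cast_add dvd_rfl, ZMod.cast_neg dvd_rfl]
  ring

theorem card_gal_abhyankarTrinomial_le (Ω : Type*) [Field Ω] [IsAlgClosed Ω] [Algebra K Ω]
    [Normal K Ω] [CharP K 7] {ζ : K} (hζ : ζ ^ 3 = 2) (t : K)
    [Fact (((abhyankarTrinomial t).map (algebraMap K Ω)).Splits)]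
    [MulAction.IsMultiplyPretransitive (abhyankarTrinomial t).Gal
      ((abhyankarTrinomial t).rootSet Ω) 2] :
    Nat.card (abhyankarTrinomial t).Gal ≤ 504 := by
  have : CharP Ω 7 := charP_of_injective_algebraMap (algebraMap K Ω).injective 7
  have h7 : (7 : Ω) = 0 := CharP.cast_eq_zero Ω 7
  have hmem {z : Ω} : z ∈ (abhyankarTrinomial t).rootSet Ω ↔
      z ^ 9 - algebraMap K Ω t * z ^ 2 + 1 = 0 := by
    rw [mem_rootSet, and_iff_right (monic_abhyankarTrinomial t).ne_zero, aeval_abhyankarTrinomial]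
  obtain ⟨y, hy⟩ := IsAlgClosed.exists_aeval_eq_zero Ω (abhyankarTrinomial t)
    (degree_ne_of_natDegree_ne (by simp [natDegree_abhyankarTrinomial]))
  have hy' := (aeval_abhyankarTrinomial t y).symm.trans hy
  have hy₀ : y ≠ 0 := by rintro rfl; simp at hy'
  obtain ⟨x, h, hx, hh, hH⟩ := exists_sqrt_translates (algebraMap K Ω ζ / y ^ 3)
  have hyh : y ^ 9 * (∏ k, h k) ^ 6 = 2 := by
    rw [show (∏ k, h k) ^ 6 = ((∏ k, h k) ^ 2) ^ 3 by ring, hH, div_pow, ← map_pow, hζ, map_ofNat]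
    field_simp
  have h₀ (k : ZMod 7) : h k ≠ 0 := fun hk ↦ by
    rw [Finset.prod_eq_zero (Finset.mem_univ k) hk] at hyh
    exact one_ne_zero (α := Ω) (by linear_combination 3 * hyh + h7)
  have hh₀ (k : ZMod 7) : h k ^ 2 = h 0 ^ 2 - (k.cast : Ω) := by
    rw [hh, hh 0, ZMod.cast_zero, sub_zero]
  obtain ⟨E, hyE, hE, hE', hrank⟩ := exists_rank_le_fanoComplProd_mem hy hx hh h₀
  have hR := fanoSum_add_one_ne_zero hh₀ h₀
  have hyz : y ≠ y * ((fanoSum h - 1) / (fanoSum h + 1)) := fun heq ↦ by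
    rw [left_eq_mul₀ hy₀, div_eq_one_iff_eq hR] at heq
    exact one_ne_zero (α := Ω) (by linear_combination 3 * heq + h7)
  refine card_gal_le_of_rootSet_subset (separable_abhyankarTrinomial t) Fact.out
    (rootSet_subset_of_isMultiplyPretransitive_two (hmem.mpr hy')
      (hmem.mpr (trinomial_root_mul_fanoSum hh₀ h₀ hy' hyh)) hyz hyE fun σ hσ ↦ ?_) hrank
  have hσR : σ (fanoSum h) ∈ E := map_fanoSum_mem hh hE hE' (σ : Ω →+* Ω) <| by
    simp [hx, hσ]
  rw [map_mul, map_div₀, map_sub, map_add, map_one, hσ]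
  exact mul_mem hyE (div_mem (sub_mem hσR (one_mem E)) (add_mem hσR (one_mem E)))

end Trinomial

section Ramification

open IsDedekindDomain IntermediateField WithZero

theorem exists_valuation_pow_ramificationIdx {A K : Type*} (L : Type*) [CommRing A]
    [IsDedekindDomain A] [Field K] [Algebra A K] [IsFractionRing A K] [Field L] [Algebra K L]
    [IsGalois K L] [FiniteDimensional K L] (v : HeightOneSpectrum A) :
    ∃ (V : Valuation L ℤᵐ⁰) (e : ℕ), e ∣ Nat.card Gal(L/K) ∧
      ∀ t : K, V (algebraMap K L t) = v.valuation K t ^ e := by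
  let : Algebra A L := ((algebraMap K L).comp (algebraMap A K)).toAlgebra
  have : IsScalarTower A K L := .of_algebraMap_eq fun _ ↦ rfl
  let B := integralClosure A L
  have : IsDedekindDomain B := IsIntegralClosure.isDedekindDomain A K L B
  have : Module.Finite A B := IsIntegralClosure.finite A K L B
  have : IsFractionRing B L := IsIntegralClosure.isFractionRing_of_finite_extension A K L B
  let : MulSemiringAction Gal(L/K) B := IsIntegralClosure.MulSemiringAction A K L B
  have : IsGaloisGroup Gal(L/K) A B := IsGaloisGroup.of_isFractionRing _ _ _ K L
  have hinj : Function.Injective (algebraMap A L) :=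
    (algebraMap K L).injective.comp (IsFractionRing.injective A K)
  have : FaithfulSMul A B := (faithfulSMul_iff_algebraMap_injective A B).mpr <|
    Function.Injective.of_comp (f := algebraMap B L) hinj
  obtain ⟨⟨P, hP, hPv⟩⟩ := v.asIdeal.nonempty_primesOver (S := B)
  let w : HeightOneSpectrum B := ⟨P, hP, Ideal.ne_bot_of_liesOver_of_ne_bot v.ne_bot P⟩
  have : w.asIdeal.LiesOver v.asIdeal := hPv
  have hcard := Ideal.ncard_primesOver_mul_ramificationIdxIn_mul_inertiaDegIn v.asIdeal B Gal(L/K)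
  rw [Ideal.ramificationIdxIn_eq_ramificationIdx v.asIdeal P Gal(L/K),
    ← Ideal.ramificationIdx'_eq_ramificationIdx v.asIdeal P v.ne_bot] at hcard
  exact ⟨w.valuation L, v.asIdeal.ramificationIdx' w.asIdeal,
    hcard ▸ (Dvd.intro _ rfl).mul_left _,
    fun t ↦ (HeightOneSpectrum.valuation_liesOver L v w t).symm⟩

variable {K L Γ₀ : Type*} [Field K] [Field L] [LinearOrderedCommGroupWithZero Γ₀]

theorem exists_mem_roots_one_lt_valuation (V : Valuation L Γ₀) {f : L[X]} (hf : f.Monic)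
    (hsplit : f.Splits) {n : ℕ} (hn : 1 < V (f.coeff n)) : ∃ y ∈ f.roots, 1 < V y := by
  by_contra! hroots
  have hlift : f ∈ lifts V.valuationSubring.subtype := by
    rw [hsplit.eq_prod_roots_of_monic hf]
    refine multiset_prod_mem _ fun q hq ↦ ?_
    obtain ⟨y, hy, rfl⟩ := Multiset.mem_map.mp hq
    exact ⟨X - C ⟨y, hroots y hy⟩, by simp⟩
  obtain ⟨⟨z, hz⟩, rfl : z = f.coeff n⟩ := (lifts_iff_coeff_lifts f).mp hlift n
  exact hn.not_ge hz

theorem exists_valuation_pow_seven_eq (V : Valuation L Γ₀) {t : L} (ht : 1 < V t)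
    (hsplit : (abhyankarTrinomial t).Splits) : ∃ y, V y ^ 7 = V t := by
  obtain ⟨y, hy, hVy⟩ := exists_mem_roots_one_lt_valuation V (monic_abhyankarTrinomial t) hsplit
    (n := 2) (by simpa [abhyankarTrinomial, coeff_X_pow, coeff_one] using ht)
  have hroot : t * y ^ 2 = y ^ 9 + 1 := by
    have hy' := (mem_roots'.mp hy).2
    rw [IsRoot.def, ← coe_aeval_eq_eval, aeval_abhyankarTrinomial] at hy'
    linear_combination -hy'
  have hdom : V t * V y ^ 2 = V y ^ 9 := by
    rw [← map_pow, ← map_mul, hroot, Valuation.map_add_eq_of_lt_left, map_pow]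
    rw [map_one, map_pow]
    exact one_lt_pow₀ hVy (by norm_num)
  refine ⟨y, mul_right_cancel₀ (pow_ne_zero 2 (zero_lt_one.trans hVy).ne') ?_⟩
  rw [hdom, ← pow_add]

theorem seven_dvd_card_gal_of_valuation_eq_exp [CharP K 7] {A : Type*} [CommRing A]
    [IsDedekindDomain A] [Algebra A K] [IsFractionRing A K] (v : HeightOneSpectrum A) {t : K}
    {s : ℕ} (ht : v.valuation K t = exp (s : ℤ)) (hs : ¬ 7 ∣ s) :
    7 ∣ Nat.card (abhyankarTrinomial t).Gal := by
  have : IsGalois K (abhyankarTrinomial t).SplittingField :=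
    .of_separable_splitting_field (separable_abhyankarTrinomial t)
  obtain ⟨V, e, he, hV⟩ :=
    exists_valuation_pow_ramificationIdx (K := K) (abhyankarTrinomial t).SplittingField v
  refine (?_ : 7 ∣ e).trans he
  rcases eq_or_ne e 0 with rfl | he₀
  · exact dvd_zero 7
  have hs₀ : s ≠ 0 := fun h ↦ hs (h ▸ dvd_zero 7)
  have hVt := hV t
  rw [ht, ← exp_nsmul, nsmul_eq_mul] at hVt
  obtain ⟨y, hy⟩ := exists_valuation_pow_seven_eq V (t := algebraMap K _ t)
    (by rw [hVt, ← exp_zero, exp_lt_exp]; positivity)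
    (by rw [← map_abhyankarTrinomial]; exact SplittingField.splits (abhyankarTrinomial t))
  have hy₀ : V y ≠ 0 := fun h ↦ by
    rw [h, zero_pow (by norm_num), hVt] at hy
    exact exp_ne_zero hy.symm
  rw [hVt, ← exp_log hy₀, ← exp_nsmul, exp_inj, nsmul_eq_mul] at hy
  have hdvd : 7 ∣ e * s := by exact_mod_cast Dvd.intro (log (V y)) hy
  exact (Nat.Prime.dvd_mul (by norm_num)).mp hdvd |>.resolve_right hs

theorem seven_dvd_card_gal_of_adjoin_eq_top {k : Type*} [Field k] [CharP K 7] [Algebra k K] {x : K}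
    (hx : Transcendental k x) (htop : k⟮x⟯ = ⊤) {a : k} (ha : a ≠ 0) {s : ℕ} (hs : ¬ 7 ∣ s) :
    7 ∣ Nat.card (abhyankarTrinomial (algebraMap k K a * x⁻¹ ^ s)).Gal := by
  let : Algebra k[X] K := (aeval x).toRingHom.toAlgebra
  have : FaithfulSMul k[X] K :=
    (faithfulSMul_iff_algebraMap_injective _ _).mpr (transcendental_iff_injective.mp hx)
  have : IsFractionRing k[X] K := .of_field _ _ fun z ↦ by
    obtain ⟨p, q, hpq⟩ := (mem_adjoin_simple_iff k z).mp (htop ▸ mem_top : z ∈ k⟮x⟯)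
    exact ⟨p, q, hpq⟩
  let v : HeightOneSpectrum k[X] :=
    ⟨Ideal.span {X}, (Ideal.span_singleton_prime X_ne_zero).mpr prime_X, by simp⟩
  have hvx : v.valuation K x = exp (-1 : ℤ) := by
    rw [← aeval_X (R := k) x, ← v.intValuation_singleton X_ne_zero rfl]
    exact v.valuation_of_algebraMap X
  have hva : v.valuation K (algebraMap k K a) = 1 := by
    rw [← aeval_C (R := k) x a]
    refine (v.valuation_of_algebraMap (C a)).trans (v.intValuation_eq_one_iff.mpr fun hmem ↦ ha ?_)
    rwa [Ideal.mem_span_singleton, X_dvd_iff, coeff_C_zero] at hmem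
  refine seven_dvd_card_gal_of_valuation_eq_exp v ?_ hs
  rw [map_mul, map_pow, map_inv₀, hva, hvx, ← exp_neg, ← exp_nsmul]
  simp

end Ramification

section Irreducible

theorem irreducible_C_mul_X_pow_add_C {R : Type*} [CommRing R] [IsDomain R] {b c p : R}
    (hp : Prime p) (hpc : p ∣ c) (hpc' : ¬ p ^ 2 ∣ c) (hbc : IsRelPrime b c) {n : ℕ}
    (hn : n ≠ 0) : Irreducible (C b * X ^ n + C c) := by
  have hpb : ¬ p ∣ b := fun h ↦ hp.not_isUnit (hbc h hpc)
  have hb : b ≠ 0 := fun h ↦ hpb (h ▸ dvd_zero p)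
  have hdeg : (C b * X ^ n + C c).degree = (n : WithBot ℕ) := by
    compute_degree!
    simpa [hn] using hb
  refine irreducible_of_eisenstein_criterion (P := Ideal.span {p})
    ((Ideal.span_singleton_prime hp.ne_zero).mpr hp) ?_ (fun m hm ↦ ?_) ?_ ?_ fun r hr ↦ ?_
  · rwa [leadingCoeff, natDegree_eq_of_degree_eq_some hdeg, coeff_add, coeff_C_mul_X_pow,
      if_pos rfl, coeff_C_of_ne_zero hn, add_zero, Ideal.mem_span_singleton]
  · rw [hdeg, Nat.cast_lt] at hm
    rw [coeff_add, coeff_C_mul_X_pow, if_neg hm.ne, zero_add, coeff_C, Ideal.mem_span_singleton]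
    split_ifs
    exacts [hpc, dvd_zero p]
  · rw [hdeg]
    exact_mod_cast hn.pos
  · rwa [Ideal.span_singleton_pow, Ideal.mem_span_singleton, coeff_add, coeff_C_zero,
      coeff_C_mul_X_pow, if_neg hn.symm, zero_add]
  · rw [C_dvd_iff_dvd_coeff] at hr
    refine hbc ?_ ?_
    · simpa [coeff_C_of_ne_zero hn] using hr n
    · simpa [hn.symm] using hr 0

variable {k : Type*} [Field k]

theorem not_X_add_one_sq_dvd_X_pow_nine_add_one (h9 : (9 : k) ≠ 0) :
    ¬ (X + 1 : k[X]) ^ 2 ∣ X ^ 9 + 1 := fun ⟨q, hq⟩ ↦ by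
  have hderiv := congrArg (eval (-1) ∘ derivative) hq
  refine h9 ?_
  simpa [derivative_mul, derivative_pow] using hderiv

theorem irreducible_abhyankarTrinomial (h9 : (9 : k) ≠ 0) {a : k} (ha : a ≠ 0) {s : ℕ}
    (hs : s ≠ 0) :
    Irreducible (abhyankarTrinomial (algebraMap k (RatFunc k) a * RatFunc.X ^ s)) := by
  have hmap : (abhyankarTrinomial (C a * X ^ s)).map (algebraMap k[X] (RatFunc k)) =
      abhyankarTrinomial (algebraMap k (RatFunc k) a * RatFunc.X ^ s) := by
    rw [map_abhyankarTrinomial]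
    simp [RatFunc.algebraMap_eq_C]
  have hmonic : (abhyankarTrinomial (C a * X ^ s)).Monic := monic_abhyankarTrinomial _
  have hswap : Bivariate.swap (R := k) (abhyankarTrinomial (C a * X ^ s)) =
      C (-C a * X ^ 2) * X ^ s + C (X ^ 9 + 1) := by
    simp only [abhyankarTrinomial, map_add, map_sub, map_mul, map_pow, map_one, map_neg,
      Bivariate.swap_X, Bivariate.swap_Y, Bivariate.swap_C_C]
    ring
  rw [← hmap, ← hmonic.irreducible_iff_irreducible_map_fraction_map,
    ← MulEquiv.irreducible_iff (Bivariate.swap (R := k)), hswap]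
  refine irreducible_C_mul_X_pow_add_C (p := X + 1) (by simpa using prime_X_sub_C (-1 : k)) ?_
    (not_X_add_one_sq_dvd_X_pow_nine_add_one h9) ?_ hs
  · exact (Odd.add_dvd_pow_add_pow X 1 (by decide : Odd 9)).trans (by simp)
  · refine IsCoprime.isRelPrime ⟨C a⁻¹ * X ^ 7, 1, ?_⟩
    have : C a⁻¹ * C a = 1 := by rw [← C_mul, inv_mul_cancel₀ ha, C_1]
    linear_combination (-X ^ 9) * this

end Irreducible

section BaseChange

variable {K : Type*} [Field K]

theorem nonempty_gal_map_frobenius_mulEquiv (p : ℕ) [ExpChar K p] {f : K[X]} (hf : f.Separable) :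
    Nonempty ((f.map (frobenius K p)).Gal ≃* f.Gal) := by
  have : ExpChar f.SplittingField p :=
    expChar_of_injective_algebraMap (algebraMap K f.SplittingField).injective p
  have : IsGalois K f.SplittingField := .of_separable_splitting_field hf
  have hsplits : ((f.map (frobenius K p)).map (algebraMap K f.SplittingField)).Splits := by
    rw [Polynomial.map_map, RingHom.frobenius_comm, ← Polynomial.map_map]
    exact (SplittingField.splits f).map _
  have : (f.map (frobenius K p)).IsSplittingField K f.SplittingField := by
    refine isSplittingField_iff_intermediateField.mpr ⟨hsplits, ?_⟩
    have hadjoin := (isSplittingField_iff_intermediateField.mp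
      (inferInstance : f.IsSplittingField K f.SplittingField)).2
    rw [IntermediateField.adjoin_eq_adjoin_pow_expChar_of_isSeparable' K _ _ p] at hadjoin
    rw [eq_top_iff, ← hadjoin]
    refine IntermediateField.adjoin.mono _ _ _ ?_
    rintro _ ⟨x, hx, rfl⟩
    rw [mem_rootSet, Polynomial.map_ne_zero_iff (frobenius K p).injective] at *
    refine ⟨hx.1, ?_⟩
    rw [aeval_def, eval₂_map, RingHom.frobenius_comm]
    change eval₂ _ (frobenius f.SplittingField p x) f = 0
    rw [← hom_eval₂, ← aeval_def, hx.2, map_zero]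
  exact ⟨AlgEquiv.autCongr (IsSplittingField.algEquiv f.SplittingField _).symm⟩

theorem card_gal_map_dvd {L : Type*} [Field L] (φ : K →+* L) (f : K[X]) :
    Nat.card (f.map φ).Gal ∣ Nat.card f.Gal := by
  algebraize [φ]
  let E := (f.map φ).SplittingField
  have hmap : (f.map φ).map (algebraMap L E) = f.map (algebraMap K E) := by
    rw [Polynomial.map_map, IsScalarTower.algebraMap_eq K L E]; rfl
  have : Fact ((f.map (algebraMap K E)).Splits) := ⟨hmap ▸ SplittingField.splits (f.map φ)⟩
  let ρ : (f.map φ).Gal →* f.Gal := (Gal.restrict f E).comp (AlgEquiv.restrictScalarsHom K)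
  refine Subgroup.card_dvd_of_injective ρ fun σ τ hστ ↦ Gal.ext _ fun x hx ↦ ?_
  have hxf : x ∈ f.rootSet E := by rwa [rootSet, aroots, ← hmap]
  have hρ (g : (f.map φ).Gal) : ((ρ g • (⟨x, hxf⟩ : f.rootSet E) : f.rootSet E) : E) = g x :=
    Gal.restrict_smul (AlgEquiv.restrictScalarsHom K g : Gal(E/K)) ⟨x, hxf⟩
  rw [← hρ σ, ← hρ τ, hστ]

theorem exists_ringHom_ratFunc_extending {k l : Type*} [Field k] [Field l] [Algebra k l] :
    ∃ φ : RatFunc k →+* RatFunc l, φ RatFunc.X = RatFunc.X ∧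
      ∀ a, φ (algebraMap k (RatFunc k) a) = algebraMap l (RatFunc l) (algebraMap k l a) := by
  let ψ : k[X] →+* RatFunc l := (algebraMap l[X] (RatFunc l)).comp
    (mapRingHom (algebraMap k l))
  have hψ : Function.Injective ψ := (RatFunc.algebraMap_injective l).comp
    (map_injective _ (algebraMap k l).injective)
  refine ⟨IsFractionRing.lift hψ, ?_, fun a ↦ ?_⟩
  · rw [← RatFunc.algebraMap_X, IsFractionRing.lift_algebraMap]
    simp [ψ]
  · rw [RatFunc.algebraMap_eq_C, ← RatFunc.algebraMap_C, IsFractionRing.lift_algebraMap]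
    simp [ψ, RatFunc.algebraMap_eq_C]

end BaseChange

section SevenDvd

variable {k : Type*} [Field k] [CharP k 7]

theorem seven_dvd_card_gal_of_not_dvd {a : k} (ha : a ≠ 0) {s : ℕ} (hs : ¬ 7 ∣ s) :
    7 ∣ Nat.card (abhyankarTrinomial (algebraMap k (RatFunc k) a * RatFunc.X ^ s)).Gal := by
  have : CharP (RatFunc k) 7 :=
    charP_of_injective_algebraMap (algebraMap k (RatFunc k)).injective 7
  have hX : Transcendental k (RatFunc.X : RatFunc k)⁻¹ := fun h ↦
    RatFunc.transcendental_X (by simpa using h.inv)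
  have htop : IntermediateField.adjoin k {(RatFunc.X : RatFunc k)⁻¹} = ⊤ := by
    rw [eq_top_iff, ← RatFunc.adjoin_X, IntermediateField.adjoin_simple_le_iff]
    simpa using inv_mem (IntermediateField.mem_adjoin_simple_self k (RatFunc.X : RatFunc k)⁻¹)
  simpa only [inv_inv] using seven_dvd_card_gal_of_adjoin_eq_top hX htop ha hs

theorem seven_dvd_card_gal_of_perfectField [PerfectField k] {a : k} (ha : a ≠ 0) {s : ℕ}
    (hs : s ≠ 0) :
    7 ∣ Nat.card (abhyankarTrinomial (algebraMap k (RatFunc k) a * RatFunc.X ^ s)).Gal := by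
  have : Fact (Nat.Prime 7) := ⟨by norm_num⟩
  have : CharP (RatFunc k) 7 :=
    charP_of_injective_algebraMap (algebraMap k (RatFunc k)).injective 7
  induction s using Nat.strong_induction_on generalizing a with
  | _ s ih =>
    by_cases h7 : 7 ∣ s
    · obtain ⟨r, rfl⟩ := h7
      obtain ⟨b, rfl⟩ := surjective_frobenius k 7 a
      obtain ⟨e⟩ := nonempty_gal_map_frobenius_mulEquiv 7
        (separable_abhyankarTrinomial (algebraMap k (RatFunc k) b * RatFunc.X ^ r))
      have hfrob : frobenius (RatFunc k) 7 (algebraMap k (RatFunc k) b * RatFunc.X ^ r) =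
          algebraMap k (RatFunc k) (frobenius k 7 b) * RatFunc.X ^ (7 * r) := by
        simp only [frobenius_def, map_pow, mul_pow, ← pow_mul, mul_comm r]
      rw [map_abhyankarTrinomial, hfrob] at e
      rw [Nat.card_congr e.toEquiv]
      exact ih r (by lia) (by rintro rfl; simp at ha) (by lia)
    · exact seven_dvd_card_gal_of_not_dvd ha h7

theorem seven_dvd_card_gal {a : k} (ha : a ≠ 0) {s : ℕ} (hs : s ≠ 0) :
    7 ∣ Nat.card (abhyankarTrinomial (algebraMap k (RatFunc k) a * RatFunc.X ^ s)).Gal := by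
  obtain ⟨φ, hφX, hφ⟩ := exists_ringHom_ratFunc_extending (k := k) (l := AlgebraicClosure k)
  have : CharP (AlgebraicClosure k) 7 :=
    charP_of_injective_algebraMap (algebraMap k (AlgebraicClosure k)).injective 7
  have hdvd := seven_dvd_card_gal_of_perfectField (k := AlgebraicClosure k)
    (a := algebraMap k _ a) (by simpa using ha) hs
  refine hdvd.trans ?_
  rw [← hφ, ← hφX, ← map_pow, ← map_mul, ← map_abhyankarTrinomial]
  exact card_gal_map_dvd φ _

end SevenDvd

section PrimeAddTwo

open MulAction
open scoped Pointwise

variable {p : ℕ} [Fact p.Prime] {α : Type*}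

section PrimeOrder

variable {P : Type*} [Group P] [MulAction P α]

theorem fixedPoints_ne_univ [Nontrivial P] [FaithfulSMul P α] :
    fixedPoints P α ≠ Set.univ := fun huniv ↦ by
  obtain ⟨g, hg⟩ := exists_ne (1 : P)
  refine hg (FaithfulSMul.eq_of_smul_eq_smul fun x : α ↦ ?_)
  have hx : x ∈ fixedPoints P α := huniv ▸ Set.mem_univ x
  rw [one_smul, hx g]

theorem disjoint_orbit_fixedPoints {a : α} (ha : a ∉ fixedPoints P α) :
    Disjoint (orbit P a) (fixedPoints P α) :=
  Set.disjoint_left.mpr fun _ hb hfix ↦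
    ha (mem_fixedPoints'.mp hfix a (mem_orbit_symm.mp hb) ▸ hfix)

theorem ncard_fixedPoints_of_card_eq_prime_add_two [FaithfulSMul P α] (hp : p ≠ 2)
    (hP : Nat.card P = p) (hα : Nat.card α = p + 2) : (fixedPoints P α).ncard = 2 := by
  have hp2 : 2 ≤ p := (Fact.out : p.Prime).two_le
  have : Finite α := Nat.finite_of_card_ne_zero (by lia)
  have : Finite P := Nat.finite_of_card_ne_zero (by lia)
  have : Nontrivial P := Finite.one_lt_card_iff_nontrivial.mp (by lia)
  have hmod : 2 ≡ (fixedPoints P α).ncard [MOD p] :=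
    (Nat.add_mod_left p 2).symm.trans <| hα ▸
      (IsPGroup.of_card (p := p) (n := 1) (by rwa [pow_one])).card_modEq_card_fixedPoints α
  have hlt : (fixedPoints P α).ncard < p + 2 := hα ▸ Set.ncard_lt_card fixedPoints_ne_univ
  obtain h | h := lt_or_ge (fixedPoints P α).ncard p
  · exact (Nat.ModEq.eq_of_lt_of_lt hmod (by lia) h).symm
  · have : 2 ≡ (fixedPoints P α).ncard - p [MOD p] :=
      hmod.trans (by rw [Nat.ModEq, Nat.mod_eq_sub_mod h])
    have := this.eq_of_lt_of_lt (by lia) (by lia)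
    lia

theorem orbit_eq_compl_fixedPoints_of_card_eq_prime_add_two [FaithfulSMul P α] (hp : p ≠ 2)
    (hP : Nat.card P = p) (hα : Nat.card α = p + 2) {a : α} (ha : a ∉ fixedPoints P α) :
    orbit P a = (fixedPoints P α)ᶜ := by
  have : Finite α := Nat.finite_of_card_ne_zero (by lia)
  refine Set.eq_of_subset_of_ncard_le (disjoint_orbit_fixedPoints ha).subset_compl_right ?_
  have hcompl := Set.ncard_add_ncard_compl (fixedPoints P α)
  rw [ncard_fixedPoints_of_card_eq_prime_add_two hp hP hα, hα] at hcompl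
  obtain ⟨n, hn⟩ := (IsPGroup.of_card (p := p) (n := 1) (by rwa [pow_one])).card_orbit a
  rw [Nat.card_coe_set_eq] at hn
  obtain rfl | hn0 := eq_or_ne n 0
  · refine absurd (subsingleton_orbit_iff_mem_fixedPoints.mp ?_) ha
    exact Set.ncard_le_one_iff_subsingleton.mp hn.le
  · have := Nat.le_self_pow hn0 p
    lia

end PrimeOrder

variable {G : Type*} [Group G] [MulAction G α] [FaithfulSMul G α]

theorem isPreprimitive_of_card_eq_prime_add_two [IsPretransitive G α] (hp : p ≠ 2)
    (hα : Nat.card α = p + 2) {P : Subgroup G} (hP : Nat.card P = p) : IsPreprimitive G α := by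
  have hp2 : 2 ≤ p := (Fact.out : p.Prime).two_le
  have : Finite α := Nat.finite_of_card_ne_zero (by lia)
  have hfix := ncard_fixedPoints_of_card_eq_prime_add_two hp hP hα
  have hcompl := Set.ncard_add_ncard_compl (fixedPoints P α)
  obtain ⟨a, ha⟩ := Set.nonempty_of_ncard_ne_zero (hfix ▸ two_ne_zero)
  refine IsPreprimitive.of_isTrivialBlock_base a fun {B} haB hB ↦ ?_
  have hdvd : B.ncard ∣ p + 2 := hα ▸ hB.ncard_dvd_card ⟨a, haB⟩
  by_cases hBfix : B ⊆ fixedPoints P α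
  · left
    have hle : B.ncard ≤ 2 := hfix ▸ Set.ncard_le_ncard hBfix
    have hne : B.ncard ≠ 2 := fun h ↦ hp <|
      ((Nat.prime_dvd_prime_iff_eq Nat.prime_two Fact.out).mp
        ((Nat.dvd_add_left (dvd_refl 2)).mp (h ▸ hdvd))).symm
    exact Set.ncard_le_one_iff_subsingleton.mp (by lia)
  · right
    obtain ⟨b, hbB, hb⟩ := Set.not_subset.mp hBfix
    have hsub : (fixedPoints P α)ᶜ ⊆ B := by
      rw [← orbit_eq_compl_fixedPoints_of_card_eq_prime_add_two hp hP hα hb]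
      rintro _ ⟨g, rfl⟩
      have : (g : G) • B = B := hB.smul_eq_of_mem haB ((ha g).symm ▸ haB)
      exact this ▸ Set.smul_mem_smul_set hbB
    refine hB.eq_univ_of_card_lt ?_
    have := Set.ncard_le_ncard hsub
    lia

theorem isMultiplyPretransitive_three_of_card_eq_prime_add_two [Finite G] [IsPretransitive G α]
    (hp : p ≠ 2) (hα : Nat.card α = p + 2) (hdvd : p ∣ Nat.card G) :
    IsMultiplyPretransitive G α 3 := by
  have hp2 : 2 ≤ p := (Fact.out : p.Prime).two_le
  have : Finite α := Nat.finite_of_card_ne_zero (by lia)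
  obtain ⟨g, hg⟩ := exists_prime_orderOf_dvd_card' p hdvd
  let P := Subgroup.zpowers g
  have hP : Nat.card P = p := (Nat.card_zpowers g).trans hg
  have hfix := ncard_fixedPoints_of_card_eq_prime_add_two hp hP hα
  have hprim : IsPreprimitive (fixingSubgroup G (fixedPoints P α))
      (SubMulAction.ofFixingSubgroup G (fixedPoints P α)) := by
    have : IsPretransitive (fixingSubgroup G (fixedPoints P α))
        (SubMulAction.ofFixingSubgroup G (fixedPoints P α)) := by
      refine ⟨fun ⟨b, hb⟩ ⟨c, hc⟩ ↦ ?_⟩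
      have hc' : c ∈ orbit P b := by
        rwa [orbit_eq_compl_fixedPoints_of_card_eq_prime_add_two hp hP hα hb]
      obtain ⟨h, rfl⟩ := hc'
      exact ⟨⟨h, (mem_fixingSubgroup_iff G).mpr fun x hx ↦ hx h⟩, rfl⟩
    have hcard : Nat.card (SubMulAction.ofFixingSubgroup G (fixedPoints P α)) = p := by
      have hcompl := Set.ncard_add_ncard_compl (fixedPoints P α)
      change Nat.card ((fixedPoints P α)ᶜ : Set α) = p
      rw [Nat.card_coe_set_eq]
      lia
    exact IsPreprimitive.of_prime_card (hcard ▸ Fact.out)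
  have := (isPreprimitive_of_card_eq_prime_add_two hp hα hP).isMultiplyPreprimitive
    (n := 1) hfix (by lia) hprim
  exact IsMultiplyPreprimitive.isMultiplyPretransitive G α 3

end PrimeAddTwo

section FieldOfEndomorphisms

variable {V : Type*} [AddCommGroup V] {T : Set (AddMonoid.End V)}

theorem apply_ne_zero_of_mem_centralizer
    (htrans : ∀ v : V, v ≠ 0 → ∀ w : V, w ≠ 0 → ∃ t ∈ T, t v = w)
    {d : AddMonoid.End V} (hd : d ∈ Subring.centralizer T) (hd0 : d ≠ 0) {v : V} (hv : v ≠ 0) :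
    d v ≠ 0 := by
  refine fun hdv ↦ hd0 (AddMonoidHom.ext fun w ↦ ?_)
  obtain rfl | hw := eq_or_ne w 0
  · exact map_zero d
  obtain ⟨t, ht, rfl⟩ := htrans v hv w hw
  calc d (t v) = t (d v) := (DFunLike.congr_fun (hd t ht) v).symm
    _ = 0 := by rw [hdv, map_zero]

theorem mem_of_mem_centralizer [Nontrivial V] (hcomm : ∀ s ∈ T, ∀ t ∈ T, s * t = t * s)
    (htrans : ∀ v : V, v ≠ 0 → ∀ w : V, w ≠ 0 → ∃ t ∈ T, t v = w)
    {d : AddMonoid.End V} (hd : d ∈ Subring.centralizer T) (hd0 : d ≠ 0) : d ∈ T := by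
  obtain ⟨v, hv⟩ := exists_ne (0 : V)
  obtain ⟨t, ht, htv⟩ := htrans v hv (d v) (apply_ne_zero_of_mem_centralizer htrans hd hd0 hv)
  have htcent : t ∈ Subring.centralizer T := fun s hs ↦ hcomm s hs t ht
  suffices d - t = 0 by rwa [sub_eq_zero.mp this]
  by_contra hdt
  exact apply_ne_zero_of_mem_centralizer htrans (sub_mem hd htcent) hdt hv
    (sub_eq_zero.mpr htv.symm)

theorem isDomain_centralizer [Nontrivial V]
    (htrans : ∀ v : V, v ≠ 0 → ∀ w : V, w ≠ 0 → ∃ t ∈ T, t v = w) :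
    IsDomain (Subring.centralizer T) := by
  obtain ⟨v, hv⟩ := exists_ne (0 : V)
  have : Nontrivial (Subring.centralizer T) :=
    ⟨0, 1, fun h ↦ hv (DFunLike.congr_fun (congrArg Subtype.val h) v).symm⟩
  have : NoZeroDivisors (Subring.centralizer T) := ⟨fun {d d'} h ↦ by
    by_contra! hne
    have hd'v := apply_ne_zero_of_mem_centralizer htrans d'.2 (by simpa using hne.2) hv
    exact apply_ne_zero_of_mem_centralizer htrans d.2 (by simpa using hne.1) hd'v
      (DFunLike.congr_fun (congrArg Subtype.val h) v)⟩
  exact NoZeroDivisors.to_isDomain _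

theorem bijective_eval_centralizer (hcomm : ∀ s ∈ T, ∀ t ∈ T, s * t = t * s)
    (htrans : ∀ v : V, v ≠ 0 → ∀ w : V, w ≠ 0 → ∃ t ∈ T, t v = w) {v : V} (hv : v ≠ 0) :
    Function.Bijective
      ((AddMonoidHom.eval v).comp (Subring.centralizer T).subtype.toAddMonoidHom) := by
  refine ⟨(injective_iff_map_eq_zero _).mpr fun d hd ↦ ?_, fun w ↦ ?_⟩
  · by_contra hd0
    exact apply_ne_zero_of_mem_centralizer htrans d.2 (by simpa using hd0) hv hd
  · obtain rfl | hw := eq_or_ne w 0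
    · exact ⟨0, rfl⟩
    · obtain ⟨t, ht, rfl⟩ := htrans v hv w hw
      exact ⟨⟨t, fun s hs ↦ hcomm s hs t ht⟩, rfl⟩

theorem exists_addEquiv_forall_mul_of_commute_of_transitive [Finite V] [Nontrivial V]
    (hcomm : ∀ s ∈ T, ∀ t ∈ T, s * t = t * s)
    (htrans : ∀ v : V, v ≠ 0 → ∀ w : V, w ≠ 0 → ∃ t ∈ T, t v = w)
    {F : Type*} [Field F] [Finite F] (hF : Nat.card F = Nat.card V) :
    ∃ ν : F ≃+ V, ∀ a ≠ 0, ∃ t ∈ T, ∀ x, t (ν x) = ν (a * x) := by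
  let R := Subring.centralizer T
  have hmem (d : R) (hd : d ≠ 0) : (d : AddMonoid.End V) ∈ T :=
    mem_of_mem_centralizer hcomm htrans d.2 (by simpa using hd)
  let : CommRing R :=
    { (inferInstance : Ring R) with
      mul_comm := fun d d' ↦ by
        obtain rfl | hd := eq_or_ne d 0
        · rw [zero_mul, mul_zero]
        · exact Subtype.ext (d'.2 d (hmem d hd)) }
  have : IsDomain R := isDomain_centralizer htrans
  obtain ⟨v, hv⟩ := exists_ne (0 : V)
  let ev : R ≃+ V := AddEquiv.ofBijective _ (bijective_eval_centralizer hcomm htrans hv)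
  have : Finite R := Finite.of_equiv V ev.symm.toEquiv
  let : Field R := (Finite.isField_of_domain R).toField
  have := Fintype.ofFinite F
  have := Fintype.ofFinite R
  let σ : F ≃+* R := FiniteField.ringEquivOfCardEq <| by
    rw [← Nat.card_eq_fintype_card, ← Nat.card_eq_fintype_card, hF, Nat.card_congr ev.toEquiv]
  refine ⟨σ.toAddEquiv.trans ev, fun a ha ↦ ⟨σ a, hmem _ (by simpa using ha), fun x ↦ ?_⟩⟩
  change (σ a * σ x : R).1 v = (σ (a * x)).1 v
  rw [map_mul]

end FieldOfEndomorphisms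

section NormalComplement

variable {S : Type*} [Group S] {p : ℕ} [Fact p.Prime] {T : Subgroup S}

open Subgroup

theorem exists_normal_isComplement'_of_normalizer_eq_self (hT : Nat.card T = p)
    (hS : Nat.card S = (p + 1) * p) (hself : normalizer (T : Set S) = T) :
    ∃ N : Subgroup S, N.Normal ∧ N.IsComplement' T := by
  have hp0 : 0 < p := (Fact.out : p.Prime).pos
  have : Finite S := Nat.finite_of_card_ne_zero (by rw [hS]; positivity)
  have hindex : T.index = p + 1 :=
    Nat.eq_of_mul_eq_mul_right hp0 (by rw [← hS, ← hT, index_mul_card])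
  let P : Sylow p S := (IsPGroup.of_card (p := p) (n := 1) (by rwa [pow_one])).toSylow (by
    rw [hindex, Nat.dvd_add_right dvd_rfl]
    exact (Fact.out : p.Prime).not_dvd_one)
  have hcyc : IsCyclic T := isCyclic_of_prime_card hT
  have hP : normalizer ((P : Subgroup S) : Set S) ≤ centralizer (P : Subgroup S) :=
    hself.le.trans ((T.le_centralizer_iff_isMulCommutative).mpr hcyc.isMulCommutative)
  exact ⟨_, MonoidHom.normal_ker _, MonoidHom.ker_transferSylow_isComplement' P hP⟩

variable {N : Subgroup S}

theorem eq_one_of_commute_of_isComplement' (hNT : N.IsComplement' T) (hT : Nat.card T = p)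
    (hself : normalizer (T : Set S) = T) {n t : S} (hn : n ∈ N) (ht : t ∈ T) (ht1 : t ≠ 1)
    (h : Commute n t) : n = 1 := by
  have hnT : n ∈ normalizer (T : Set S) := by
    have hcomm (u : S) (hu : u ∈ T) : n * u = u * n := by
      obtain ⟨i, hi⟩ := mem_zpowers_of_prime_card (g := (⟨t, ht⟩ : T)) (g' := ⟨u, hu⟩) hT
        (by simpa [Subtype.ext_iff] using ht1)
      rw [← show t ^ i = u by simpa [Subtype.ext_iff] using hi]
      exact h.zpow_right i
    refine centralizer_le_normalizer _ fun u hu ↦ ?_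
    exact (hcomm u hu).symm
  rw [hself] at hnT
  exact disjoint_def.mp hNT.disjoint hn hnT

theorem exists_conj_eq_of_isComplement' [N.Normal] (hNT : N.IsComplement' T)
    (hT : Nat.card T = p) (hself : normalizer (T : Set S) = T) (hN : Nat.card N = p + 1)
    {n m : N} (hn : n ≠ 1) (hm : m ≠ 1) : ∃ t ∈ T, MulAut.conjNormal t n = m := by
  have : Finite N := Nat.finite_of_card_ne_zero (by simp [hN])
  have : Finite T := Nat.finite_of_card_ne_zero (by simp [hT, (Fact.out : p.Prime).ne_zero])
  let orb (t : T) : {n : N // n ≠ 1} :=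
    ⟨MulAut.conjNormal (t : S) n, (MulEquiv.map_ne_one_iff _).mpr hn⟩
  have horb : Function.Injective orb := by
    intro t u htu
    by_contra hne
    refine hn (Subtype.ext <| eq_one_of_commute_of_isComplement' hNT hT hself n.2
      (T.mul_mem (T.inv_mem t.2) u.2) (fun h ↦ hne (Subtype.ext (inv_mul_eq_one.mp h))) ?_)
    have hconj : (t * n * (t : S)⁻¹ : S) = u * n * (u : S)⁻¹ := by
      simpa [orb, Subtype.ext_iff] using htu
    calc (n * ((t : S)⁻¹ * u) : S) = (t : S)⁻¹ * (t * n * (t : S)⁻¹) * u := by group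
      _ = (t : S)⁻¹ * u * n := by rw [hconj]; group
  have hcard : Nat.card {n : N // n ≠ 1} = Nat.card T := by
    classical
    rw [hT, ← Nat.add_right_cancel_iff (n := 1), ← hN, ← Finite.card_option]
    exact Nat.card_congr (Equiv.optionSubtypeNe 1)
  obtain ⟨t, ht⟩ := ((Nat.bijective_iff_injective_and_card orb).mpr ⟨horb, hcard.symm⟩).2 ⟨m, hm⟩
  exact ⟨t, t.2, congrArg Subtype.val ht⟩

/-- `N` has an involution by parity, and `T` moves it to every other nontrivial element. -/
theorem mul_self_eq_one_of_isComplement' [N.Normal] (hp : p ≠ 2) (hNT : N.IsComplement' T)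
    (hT : Nat.card T = p) (hself : normalizer (T : Set S) = T) (hN : Nat.card N = p + 1) (n : N) :
    n * n = 1 := by
  have : Finite N := Nat.finite_of_card_ne_zero (by simp [hN])
  obtain ⟨m, hm⟩ := exists_prime_orderOf_dvd_card' (G := N) 2 <| by
    rw [hN]; exact ((Fact.out : p.Prime).odd_of_ne_two hp).add_one.two_dvd
  obtain rfl | hn := eq_or_ne n 1
  · exact one_mul 1
  obtain ⟨t, -, rfl⟩ := exists_conj_eq_of_isComplement' hNT hT hself hN
    (n := m) (fun h ↦ by simp [h] at hm) hn
  rw [← map_mul, ← sq, ← hm, pow_orderOf_eq_one, map_one]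

theorem exists_field_equiv_of_isComplement' [N.Normal] (hp : p ≠ 2) (hNT : N.IsComplement' T)
    (hT : Nat.card T = p) (hself : normalizer (T : Set S) = T) (hN : Nat.card N = p + 1)
    {F : Type*} [Field F] [Finite F] (hF : Nat.card F = p + 1) :
    ∃ ν : Multiplicative F ≃* N, ∀ a ≠ 0, ∃ t ∈ T, ∀ x,
      MulAut.conjNormal t (ν (.ofAdd x)) = ν (.ofAdd (a * x)) := by
  have : Finite N := Nat.finite_of_card_ne_zero (by simp [hN])
  have : Nontrivial N := Finite.one_lt_card_iff_nontrivial.mp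
    (by rw [hN]; exact Nat.lt_add_of_pos_left (Fact.out : p.Prime).pos)
  have hsq (n : N) : orderOf n ∣ 2 := orderOf_dvd_of_pow_eq_one <| by
    rw [sq, mul_self_eq_one_of_isComplement' hp hNT hT hself hN]
  let : CommGroup N :=
    { (inferInstance : Group N) with mul_comm := Commute.of_orderOf_dvd_two hsq }
  have hTcomm (s) (hs : s ∈ T) (t) (ht : t ∈ T) : s * t = t * s := by
    have := (isCyclic_of_prime_card hT).isMulCommutative
    exact le_centralizer T ht s hs
  let conj (t : S) : AddMonoid.End (Additive N) :=
    (MulAut.conjNormal t : N ≃* N).toMonoidHom.toAdditive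
  have hconj_mul (s t : S) : conj s * conj t = conj (s * t) := by
    simp only [conj, map_mul]; rfl
  obtain ⟨ν, hν⟩ := exists_addEquiv_forall_mul_of_commute_of_transitive (V := Additive N)
    (T := conj '' T)
    (by
      rintro _ ⟨s, hs, rfl⟩ _ ⟨t, ht, rfl⟩
      rw [hconj_mul, hconj_mul, hTcomm s hs t ht])
    (fun n hn m hm ↦ by
      obtain ⟨t, ht, h⟩ := exists_conj_eq_of_isComplement' hNT hT hself hN
        (n := n.toMul) (m := m.toMul) hn hm
      exact ⟨_, ⟨t, ht, rfl⟩, h⟩)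
    (F := F) (hF.trans hN.symm)
  refine ⟨AddEquiv.toMultiplicativeLeft ν, fun a ha ↦ ?_⟩
  obtain ⟨_, ⟨t, ht, rfl⟩, h⟩ := hν a ha
  exact ⟨t, ht, h⟩

end NormalComplement

section SharplyTransitive

open MulAction Subgroup

theorem eq_one_of_smul_embedding_eq {G α : Type*} [Group G] [MulAction G α] [Finite α] {n : ℕ}
    [IsMultiplyPretransitive G α n] (hG : Nat.card G = Nat.card (Fin n ↪ α)) {g : G}
    {x : Fin n ↪ α} (h : g • x = x) : g = 1 := by
  have : Nonempty (Fin n ↪ α) := ⟨x⟩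
  have : Finite G := Nat.finite_of_card_ne_zero (hG.trans_ne Nat.card_pos.ne')
  have hbij : Function.Bijective fun g : G ↦ g • x :=
    (Nat.bijective_iff_surjective_and_card _).mpr ⟨fun y ↦ exists_smul_eq G x y, hG⟩
  exact hbij.1 (h.trans (one_smul G x).symm)

theorem bijective_smul_of_isComplement'_stabilizer {G α : Type*} [Group G] [MulAction G α]
    [IsPretransitive G α] {N : Subgroup G} {o : α} (h : N.IsComplement' (stabilizer G o)) :
    Function.Bijective fun n : N ↦ n • o := by
  refine ⟨fun n m hnm ↦ ?_, fun y ↦ ?_⟩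
  · have hfix : ((m⁻¹ * n : N) : G) ∈ stabilizer G o := by
      rw [Subgroup.coe_mul, coe_inv, mem_stabilizer_iff, mul_smul, inv_smul_eq_iff]
      exact hnm
    exact (inv_mul_eq_one.mp (Subtype.ext (disjoint_def.mp h.disjoint (m⁻¹ * n).2 hfix))).symm
  · obtain ⟨g, rfl⟩ := exists_smul_eq G o y
    obtain ⟨⟨n, t⟩, rfl⟩ := h.2 g
    exact ⟨n, (mul_smul (n : G) (t : G) o).symm ▸ congrArg ((n : G) • ·) t.2.symm⟩

variable {S β : Type*} [Group S] [MulAction S β] [IsMultiplyPretransitive S β 2] {p : ℕ}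

theorem eq_one_of_smul_eq_of_smul_eq (hβ : Nat.card β = p + 1) (hS : Nat.card S = (p + 1) * p)
    {g : S} {x y : β} (hxy : x ≠ y) (hx : g • x = x) (hy : g • y = y) : g = 1 := by
  have : Finite β := Nat.finite_of_card_ne_zero (by simp [hβ])
  have := Fintype.ofFinite β
  refine eq_one_of_smul_embedding_eq (n := 2) (x := ⟨![x, y], by simpa using hxy⟩) ?_ ?_
  · rw [hS, Nat.card_eq_fintype_card, Fintype.card_embedding_eq, Fintype.card_fin,
      ← Nat.card_eq_fintype_card, hβ, Nat.descFactorial, Nat.descFactorial, Nat.descFactorial]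
    simp [mul_comm]
  · ext i
    fin_cases i <;> assumption

theorem normalizer_stabilizer_eq_self (hβ : Nat.card β = p + 1) (hS : Nat.card S = (p + 1) * p)
    {o : β} (hT : stabilizer S o ≠ ⊥) :
    normalizer (stabilizer S o : Set S) = stabilizer S o := by
  refine le_antisymm (fun g hg ↦ ?_) le_normalizer
  obtain ⟨t, ht, ht1⟩ := (stabilizer S o).bot_or_exists_ne_one.resolve_left hT
  have hgt : (g⁻¹ * t * g) • o = o := (mem_normalizer_iff''.mp hg t).mp ht
  by_contra hgo
  refine ht1 (eq_one_of_smul_eq_of_smul_eq hβ hS (Ne.symm hgo) ht ?_)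
  rwa [mul_smul, mul_smul, inv_smul_eq_iff] at hgt

theorem exists_equiv_forall_affine [Fact p.Prime] (hp : p ≠ 2) (hβ : Nat.card β = p + 1)
    (hS : Nat.card S = (p + 1) * p) {F : Type*} [Field F] [Finite F] (hF : Nat.card F = p + 1) :
    ∃ e : F ≃ β, ∀ a ≠ 0, ∀ b, ∃ g : S, ∀ x, g • e x = e (a * x + b) := by
  have : Finite β := Nat.finite_of_card_ne_zero (by simp [hβ])
  obtain ⟨o⟩ : Nonempty β := Finite.card_pos_iff.mp (hβ ▸ p.add_one_pos)
  have : IsPretransitive S β := isPretransitive_of_is_two_pretransitive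
  have hT : Nat.card (stabilizer S o) = p := Nat.eq_of_mul_eq_mul_left p.add_one_pos <| by
    rw [← hS, ← hβ, ← index_stabilizer_of_transitive S o, index_mul_card]
  have hself := normalizer_stabilizer_eq_self hβ hS (o := o) fun h ↦ by
    rw [h, card_bot] at hT
    exact (Fact.out : p.Prime).ne_one hT.symm
  obtain ⟨N, _, hNT⟩ := exists_normal_isComplement'_of_normalizer_eq_self hT hS hself
  have hN : Nat.card N = p + 1 := Nat.eq_of_mul_eq_mul_right (Fact.out : p.Prime).pos <| by
    rw [← hS, ← hNT.card_mul_card, hT]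
  obtain ⟨ν, hν⟩ := exists_field_equiv_of_isComplement' hp hNT hT hself hN hF
  have hbij := bijective_smul_of_isComplement'_stabilizer hNT
  refine ⟨(Multiplicative.ofAdd.trans ν.toEquiv).trans (.ofBijective _ hbij), fun a ha b ↦ ?_⟩
  obtain ⟨t, ht, htν⟩ := hν a ha
  refine ⟨ν (.ofAdd b) * t, fun x ↦ ?_⟩
  have hx : t * (ν (.ofAdd x) : S) = ν (.ofAdd (a * x)) * t := by
    rw [← htν, MulAut.conjNormal_apply, inv_mul_cancel_right]
  calc (ν (.ofAdd b) * t : S) • (ν (.ofAdd x) : S) • o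
      = (ν (.ofAdd b) : S) • (ν (.ofAdd (a * x)) : S) • t • o := by
        rw [mul_smul, ← mul_smul t, hx, mul_smul]
    _ = (ν (.ofAdd (a * x + b)) : S) • o := by
        rw [show t • o = o from ht, add_comm, ofAdd_add, map_mul ν, Subgroup.coe_mul, mul_smul]

end SharplyTransitive

section ProjectiveLine

open MulAction OnePoint Matrix

variable {F : Type*} [Field F] [DecidableEq F] {P : Subgroup (Equiv.Perm (OnePoint F))}

theorem ker_toPermHom_onePoint :
    (toPermHom (GL (Fin 2) F) (OnePoint F)).ker = Subgroup.center (GL (Fin 2) F) := by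
  ext A
  rw [GeneralLinearGroup.center_eq_range_scalar, MonoidHom.mem_ker, MonoidHom.mem_range]
  constructor
  · intro hA
    replace hA (x : OnePoint F) : A • x = x := Equiv.ext_iff.mp hA x
    have h10 : A 1 0 = 0 := smul_infty_eq_self_iff.mp (hA ∞)
    have h11 : A 1 1 ≠ 0 := fun h ↦ by simpa [det_fin_two, h10, h] using A.det_ne_zero
    have h01 : A 0 1 = 0 := by simpa [smul_some_eq_ite, h10, h11] using hA (0 : F)
    have h00 : A 0 0 = A 1 1 := by
      simpa [smul_some_eq_ite, h10, h11, h01, div_eq_one_iff_eq] using hA (1 : F)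
    refine ⟨.mk0 (A 1 1) h11, GeneralLinearGroup.ext fun i j ↦ ?_⟩
    fin_cases i <;> fin_cases j <;> simp [h10, h01, h00]
  · rintro ⟨c, rfl⟩
    ext x
    change (GeneralLinearGroup.scalar (Fin 2) c) • x = x
    cases x <;> simp [smul_infty_eq_ite, smul_some_eq_ite]

theorem swap_smul_zero :
    GeneralLinearGroup.swap F (0 : Fin 2) 1 • ((0 : F) : OnePoint F) = ∞ := by
  simp [smul_some_eq_ite, Matrix.swap, PEquiv.toMatrix_apply]

theorem swap_smul_infty :
    GeneralLinearGroup.swap F (0 : Fin 2) 1 • (∞ : OnePoint F) = (0 : F) := by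
  simp [smul_infty_eq_ite, Matrix.swap, PEquiv.toMatrix_apply]

theorem swap_smul_coe {a : F} (ha : a ≠ 0) :
    GeneralLinearGroup.swap F (0 : Fin 2) 1 • (a : OnePoint F) = (a⁻¹ : F) := by
  simp [smul_some_eq_ite, ha, Matrix.swap, PEquiv.toMatrix_apply]

theorem exists_smul_infty_eq_self_and_smul_coe_eq {a : F} (ha : a ≠ 0) (b : F) :
    ∃ A : GL (Fin 2) F, A • (∞ : OnePoint F) = ∞ ∧
      ∀ x : F, A • (x : OnePoint F) = (a * x + b : F) :=
  ⟨GeneralLinearGroup.mkOfDetNeZero !![a, b; 0, 1] (by simpa [det_fin_two] using ha),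
    by simp [smul_infty_eq_ite, GeneralLinearGroup.mkOfDetNeZero],
    fun x ↦ by simp [smul_some_eq_ite, GeneralLinearGroup.mkOfDetNeZero]⟩

theorem exists_smul_coe_eq_of_smul_infty_eq_self {A : GL (Fin 2) F}
    (hA : A • (∞ : OnePoint F) = ∞) :
    ∃ a ≠ 0, ∃ b, ∀ x : F, A • (x : OnePoint F) = (a * x + b : F) := by
  have h10 := smul_infty_eq_self_iff.mp hA
  have h00 : A 0 0 ≠ 0 := fun h ↦ by simpa [det_fin_two, h10, h] using A.det_ne_zero
  have h11 : A 1 1 ≠ 0 := fun h ↦ by simpa [det_fin_two, h10, h] using A.det_ne_zero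
  exact ⟨A 0 0 / A 1 1, div_ne_zero h00 h11, A 0 1 / A 1 1, fun x ↦ by
    simp [smul_some_eq_ite, h10, h11, add_div, div_mul_eq_mul_div]⟩

theorem exists_monoidHom_apply_coe_eq
    (haff : ∀ A : GL (Fin 2) F, A • (∞ : OnePoint F) = ∞ → toPerm A ∈ P)
    (hsharp : ∀ g ∈ P, ∀ x y z, x ≠ y → y ≠ z → z ≠ x → g x = x → g y = y → g z = z → g = 1)
    {w : Equiv.Perm (OnePoint F)} (hw : w ∈ P) (hwi : w ∞ = (0 : F)) (hw0 : w (0 : F) = ∞)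
    (hw1 : w (1 : F) = (1 : F)) : ∃ σ : Fˣ →* Fˣ, ∀ a : Fˣ, w (a : F) = (σ a : F) := by
  have hfin (a : Fˣ) : ∃ c : Fˣ, w (a : F) = (c : F) := by
    obtain ⟨c, hc⟩ := ne_infty_iff_exists.mp fun h : w (a : F) = ∞ ↦
      a.ne_zero (coe_injective (w.injective (h.trans hw0.symm)))
    refine ⟨.mk0 c ?_, hc.symm⟩
    rintro rfl
    exact coe_ne_infty _ (w.injective (hc.symm.trans hwi.symm))
  choose σ hσ using hfin
  refine ⟨.mk' σ fun a b ↦ ?_, hσ⟩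
  obtain ⟨A, hAi, hA⟩ := exists_smul_infty_eq_self_and_smul_coe_eq a.ne_zero 0
  obtain ⟨C, hCi, hC⟩ := exists_smul_infty_eq_self_and_smul_coe_eq (σ a).ne_zero 0
  have hcomm : w * toPerm A = toPerm C * w := by
    rw [← inv_mul_eq_one, _root_.mul_inv_rev]
    refine hsharp _ (mul_mem (mul_mem (inv_mem (haff A hAi)) (inv_mem hw))
      (mul_mem (haff C hCi) hw)) ∞ (0 : F) (1 : F)
      (infty_ne_coe _) (by simp) (coe_ne_infty _) ?_ ?_ ?_ <;>
    rw [mul_assoc, Equiv.Perm.mul_apply, Equiv.Perm.inv_eq_iff_eq, Equiv.Perm.mul_apply,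
      Equiv.Perm.inv_eq_iff_eq]
    · simp [hwi, hAi, hC]
    · simp [hw0, hA, hCi]
    · simp [hw1, hA, hC, hσ]
  have hab := Equiv.congr_fun hcomm (b : F)
  simpa [hA, hC, hσ, ← Units.val_mul, Units.ext_iff] using hab

/-- `a ↦ w a` is an endomorphism of `Fˣ` and an involution; it fixes `a * w a`, but by sharpness
nothing except `1`. -/
theorem apply_coe_eq_inv [CharP F 2]
    (haff : ∀ A : GL (Fin 2) F, A • (∞ : OnePoint F) = ∞ → toPerm A ∈ P)
    (hsharp : ∀ g ∈ P, ∀ x y z, x ≠ y → y ≠ z → z ≠ x → g x = x → g y = y → g z = z → g = 1)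
    {w : Equiv.Perm (OnePoint F)} (hw : w ∈ P) (hwi : w ∞ = (0 : F)) (hw0 : w (0 : F) = ∞)
    (hw1 : w (1 : F) = (1 : F)) {a : F} (ha : a ≠ 0) : w a = (a⁻¹ : F) := by
  obtain ⟨σ, hσ⟩ := exists_monoidHom_apply_coe_eq haff hsharp hw hwi hw0 hw1
  have hww : w * w = 1 := hsharp _ (mul_mem hw hw) ∞ (0 : F) (1 : F)
    (infty_ne_coe _) (by simp) (coe_ne_infty _) (by simp [hwi, hw0]) (by simp [hwi, hw0])
    (by simp [hw1])
  have hσσ (b : Fˣ) : σ (σ b) = b := by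
    simpa [hσ, Units.ext_iff] using Equiv.congr_fun hww (b : F)
  have hfix (b : Fˣ) (hb : σ b = b) : b = 1 := by
    by_contra hb1
    have hw_one : w = 1 := by
      refine hsharp w hw (1 : F) (b : F) (b ^ 2 : Fˣ) ?_ ?_ ?_ hw1 (by rw [hσ, hb])
        (by rw [hσ, map_pow, hb])
      · simpa [eq_comm] using hb1
      · simpa [sq] using hb1
      · have : (b : F) ≠ 1 := by simpa using hb1
        simpa [CharTwo.neg_eq] using this
    rw [hw_one] at hwi
    exact infty_ne_coe _ hwi
  have hmul (b : Fˣ) : b * σ b = 1 := hfix _ (by rw [map_mul, hσσ, mul_comm])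
  have := hσ (.mk0 a ha)
  rw [← inv_eq_of_mul_eq_one_right (hmul (.mk0 a ha))] at this
  simpa using this

theorem toPerm_mem (haff : ∀ A : GL (Fin 2) F, A • (∞ : OnePoint F) = ∞ → toPerm A ∈ P)
    (hswap : toPerm (GeneralLinearGroup.swap F (0 : Fin 2) 1) ∈ P) (A : GL (Fin 2) F) :
    toPerm A ∈ P := by
  let Q := P.comap (toPermHom (GL (Fin 2) F) (OnePoint F))
  let swap : GL (Fin 2) F := GeneralLinearGroup.swap F 0 1
  cases hA : A • (∞ : OnePoint F) with
  | infty => exact haff A hA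
  | coe c =>
    obtain ⟨B, hB, hBx⟩ := exists_smul_infty_eq_self_and_smul_coe_eq one_ne_zero (-c)
    have hBA : (swap * B * A) • (∞ : OnePoint F) = ∞ := by
      rw [mul_smul, hA, mul_smul, hBx, one_mul, add_neg_cancel, swap_smul_zero]
    have hswapB : swap * B ∈ Q := mul_mem (show swap ∈ Q from hswap) (show B ∈ Q from haff B hB)
    exact (Subgroup.mul_mem_cancel_left _ hswapB).mp (haff _ hBA)

theorem exists_smul_infty_eq (x : OnePoint F) : ∃ A : GL (Fin 2) F, A • ∞ = x := by
  cases x with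
  | infty => exact ⟨1, one_smul _ _⟩
  | coe c =>
    obtain ⟨A, -, hA⟩ := exists_smul_infty_eq_self_and_smul_coe_eq one_ne_zero c
    exact ⟨A * GeneralLinearGroup.swap F 0 1, by
      rw [mul_smul, swap_smul_infty, hA, mul_zero, zero_add]⟩

theorem mem_range_toPermHom (hP : ∀ A : GL (Fin 2) F, toPerm A ∈ P)
    (hsharp : ∀ g ∈ P, g ∞ = ∞ → g (0 : F) = (0 : F) → g (1 : F) = (1 : F) → g = 1)
    {g : Equiv.Perm (OnePoint F)} (hg : g ∈ P) :
    g ∈ (toPermHom (GL (Fin 2) F) (OnePoint F)).range := by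
  obtain ⟨A, hA⟩ := exists_smul_infty_eq (g ∞)
  let h := (toPerm A)⁻¹ * g
  have hh : h ∞ = ∞ := by
    rw [Equiv.Perm.mul_apply, Equiv.Perm.inv_eq_iff_eq, toPerm_apply, hA]
  have hfin (x : F) : ∃ c : F, c = h x :=
    ne_infty_iff_exists.mp fun hx ↦ coe_ne_infty x (h.injective (hx.trans hh.symm))
  obtain ⟨b, hb⟩ := hfin 0
  obtain ⟨c, hc⟩ := hfin 1
  have hcb : c - b ≠ 0 := fun h0 ↦ zero_ne_one (α := F) <| coe_injective <| h.injective <| by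
    rw [← hb, ← hc, sub_eq_zero.mp h0]
  obtain ⟨B, hBi, hB⟩ := exists_smul_infty_eq_self_and_smul_coe_eq hcb b
  have hBh : (toPerm B)⁻¹ * h = 1 := by
    apply hsharp _ (mul_mem (inv_mem (hP B)) (mul_mem (inv_mem (hP A)) hg)) <;>
    rw [Equiv.Perm.mul_apply, Equiv.Perm.inv_eq_iff_eq, toPerm_apply]
    · rw [hh, hBi]
    · rw [← hb, hB, mul_zero, zero_add]
    · rw [← hc, hB, mul_one, sub_add_cancel]
  exact ⟨A * B, by rw [map_mul, toPermHom_apply, toPermHom_apply, inv_mul_eq_one.mp hBh,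
    mul_inv_cancel_left]⟩

theorem nonempty_range_toPermHom_mulEquiv [CharP F 2] [PerfectRing F 2] :
    Nonempty ((toPermHom (GL (Fin 2) F) (OnePoint F)).range ≃*
      ProjectiveSpecialLinearGroup (Fin 2) F) := by
  have hsq (r : Fˣ) : ∃ c : Fˣ, c ^ Fintype.card (Fin 2) = r := by
    obtain ⟨c, hc⟩ := surjective_frobenius F 2 r
    have hc' : c ^ 2 = r := hc
    have hc0 : c ≠ 0 := fun hc0 ↦ r.ne_zero (by rw [← hc', hc0, zero_pow two_ne_zero])
    exact ⟨.mk0 c hc0, Units.ext (by simpa using hc')⟩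
  let ι := MulEquiv.ofBijective (ProjectiveSpecialLinearGroup.toPGL (n := Fin 2) (R := F))
    ⟨ProjectiveSpecialLinearGroup.toPGL_injective,
      ProjectiveSpecialLinearGroup.toPGL_surj_of_roots hsq⟩
  exact ⟨(QuotientGroup.quotientKerEquivRange _).symm.trans
    ((QuotientGroup.quotientMulEquivOfEq ker_toPermHom_onePoint).trans ι.symm)⟩

theorem range_toPermHom_eq [CharP F 2]
    (haff : ∀ A : GL (Fin 2) F, A • (∞ : OnePoint F) = ∞ → toPerm A ∈ P)
    (hsharp : ∀ g ∈ P, ∀ x y z, x ≠ y → y ≠ z → z ≠ x → g x = x → g y = y → g z = z → g = 1)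
    {w : Equiv.Perm (OnePoint F)} (hw : w ∈ P) (hwi : w ∞ = (0 : F)) (hw0 : w (0 : F) = ∞)
    (hw1 : w (1 : F) = (1 : F)) :
    (toPermHom (GL (Fin 2) F) (OnePoint F)).range = P := by
  have hswap : w = toPerm (GeneralLinearGroup.swap F (0 : Fin 2) 1) := by
    ext x
    cases x with
    | infty => rw [hwi, toPerm_apply, swap_smul_infty]
    | coe a =>
      obtain rfl | ha := eq_or_ne a 0
      · rw [hw0, toPerm_apply, swap_smul_zero]
      · rw [apply_coe_eq_inv haff hsharp hw hwi hw0 hw1 ha, toPerm_apply, swap_smul_coe ha]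
  have hmem := toPerm_mem haff (hswap ▸ hw)
  refine le_antisymm ?_ fun g hg ↦ mem_range_toPermHom hmem (fun g hg hi h0 h1 ↦ ?_) hg
  · rintro _ ⟨A, rfl⟩
    exact hmem A
  · exact hsharp g hg _ _ _ (infty_ne_coe 0) (by simp) (coe_ne_infty 1) hi h0 h1

end ProjectiveLine

section SharplyThreeTransitive

open MulAction OnePoint Matrix

variable {G α : Type*} [Group G] [MulAction G α] [IsMultiplyPretransitive G α 3] {p : ℕ}
  {F : Type*} [Field F]

theorem exists_onePoint_equiv_forall_affine [Fact p.Prime] [Finite F] (hp : p ≠ 2)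
    (hα : Nat.card α = p + 2) (hG : Nat.card G = (p + 2) * (p + 1) * p) (hF : Nat.card F = p + 1) :
    ∃ e : OnePoint F ≃ α, ∀ a ≠ 0, ∀ b, ∃ g : G, g • e ∞ = e ∞ ∧
      ∀ x : F, g • e x = e (a * x + b : F) := by
  classical
  have : Finite α := Nat.finite_of_card_ne_zero (by simp [hα])
  obtain ⟨o⟩ : Nonempty α := Finite.card_pos_iff.mp (hα ▸ (p + 1).add_one_pos)
  have : IsMultiplyPretransitive G α 2 := isMultiplyPretransitive_of_le (n := 3) (by simp)
    (by rw [hα]; have := (Fact.out : p.Prime).pos; lia)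
  have : IsPretransitive G α := isPretransitive_of_is_two_pretransitive
  have : IsMultiplyPretransitive (stabilizer G o) (SubMulAction.ofStabilizer G o) 2 :=
    SubMulAction.ofStabilizer.isMultiplyPretransitive.mp ‹IsMultiplyPretransitive G α 3›
  have hβ : Nat.card (SubMulAction.ofStabilizer G o) = p + 1 := by
    rw [← Nat.add_right_cancel_iff (n := 1), ← Finite.card_option, ← hα]
    exact Nat.card_congr (Equiv.optionSubtypeNe o)
  have hS : Nat.card (stabilizer G o) = (p + 1) * p :=
    Nat.eq_of_mul_eq_mul_left (p + 1).add_one_pos <| by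
      rw [← mul_assoc, ← hG, ← (stabilizer G o).index_mul_card, index_stabilizer_of_transitive, hα]
  obtain ⟨e, he⟩ := exists_equiv_forall_affine hp hβ hS hF
  refine ⟨(Equiv.optionCongr e).trans (Equiv.optionSubtypeNe o), fun a ha b ↦ ?_⟩
  obtain ⟨g, hg⟩ := he a ha b
  exact ⟨g, g.2, fun x ↦ congrArg Subtype.val (hg x)⟩

theorem injective_vecCons_three {x y z : α} (hxy : x ≠ y) (hyz : y ≠ z) (hzx : z ≠ x) :
    Function.Injective ![x, y, z] := by
  simp [Function.Injective, Fin.forall_fin_succ, hxy, hyz, hzx, hxy.symm, hyz.symm, hzx.symm]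

theorem exists_smul_eq_smul_eq_smul_eq {x y z x' y' z' : α} (hxy : x ≠ y) (hyz : y ≠ z)
    (hzx : z ≠ x) (hxy' : x' ≠ y') (hyz' : y' ≠ z') (hzx' : z' ≠ x') :
    ∃ g : G, g • x = x' ∧ g • y = y' ∧ g • z = z' := by
  obtain ⟨g, hg⟩ := exists_smul_eq G
    (⟨![x, y, z], injective_vecCons_three hxy hyz hzx⟩ : Fin 3 ↪ α)
    ⟨![x', y', z'], injective_vecCons_three hxy' hyz' hzx'⟩
  have hg := DFunLike.congr_fun hg
  exact ⟨g, hg 0, hg 1, hg 2⟩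

theorem eq_one_of_smul_eq_of_smul_eq_of_smul_eq (hα : Nat.card α = p + 2)
    (hG : Nat.card G = (p + 2) * (p + 1) * p) {g : G} {x y z : α} (hxy : x ≠ y) (hyz : y ≠ z)
    (hzx : z ≠ x) (hx : g • x = x) (hy : g • y = y) (hz : g • z = z) : g = 1 := by
  have : Finite α := Nat.finite_of_card_ne_zero (by simp [hα])
  refine eq_one_of_smul_embedding_eq (n := 3)
    (x := ⟨![x, y, z], injective_vecCons_three hxy hyz hzx⟩) ?_ ?_
  · have := Fintype.ofFinite α
    rw [Nat.card_eq_fintype_card (α := Fin 3 ↪ α), Fintype.card_embedding_eq, Fintype.card_fin,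
      ← Nat.card_eq_fintype_card, hα, hG]
    simp only [Nat.descFactorial]
    lia
  · ext i
    fin_cases i <;> assumption

theorem nonempty_mulEquiv_projectiveSpecialLinearGroup [FaithfulSMul G α] [Fact p.Prime] [Finite F]
    (hp : p ≠ 2) (hα : Nat.card α = p + 2) (hG : Nat.card G = (p + 2) * (p + 1) * p)
    (hF : Nat.card F = p + 1) : Nonempty (G ≃* ProjectiveSpecialLinearGroup (Fin 2) F) := by
  classical
  have : Finite α := Nat.finite_of_card_ne_zero (by simp [hα])
  have := Fintype.ofFinite F
  have : CharP F 2 := ringChar.of_eq <| FiniteField.even_card_iff_char_two.mpr <| by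
    rw [← Nat.card_eq_fintype_card, hF]
    exact Nat.even_iff.mp ((Fact.out : p.Prime).odd_of_ne_two hp).add_one
  obtain ⟨e, he⟩ := exists_onePoint_equiv_forall_affine (G := G) hp hα hG hF
  let φ : G →* Equiv.Perm (OnePoint F) := e.symm.permCongrHom.toMonoidHom.comp (toPermHom G α)
  have hφ (g : G) (x : OnePoint F) : φ g x = e.symm (g • e x) := rfl
  have hφ_inj : Function.Injective φ := e.symm.permCongrHom.injective.comp toPerm_injective
  have haff (A : GL (Fin 2) F) (hA : A • (∞ : OnePoint F) = ∞) : toPerm A ∈ φ.range := by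
    obtain ⟨a, ha, b, hab⟩ := exists_smul_coe_eq_of_smul_infty_eq_self hA
    obtain ⟨g, hgi, hg⟩ := he a ha b
    refine ⟨g, Equiv.ext fun x ↦ ?_⟩
    rw [hφ, toPerm_apply, Equiv.symm_apply_eq]
    cases x with
    | infty => rw [hgi, hA]
    | coe x => rw [hg, hab]
  have hsharp : ∀ g ∈ φ.range, ∀ x y z, x ≠ y → y ≠ z → z ≠ x → g x = x → g y = y → g z = z →
      g = 1 := by
    rintro _ ⟨g, rfl⟩ x y z hxy hyz hzx hx hy hz
    simp only [hφ, Equiv.symm_apply_eq] at hx hy hz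
    rw [eq_one_of_smul_eq_of_smul_eq_of_smul_eq hα hG (e.injective.ne hxy) (e.injective.ne hyz)
      (e.injective.ne hzx) hx hy hz, map_one]
  obtain ⟨w, hwi, hw0, hw1⟩ := exists_smul_eq_smul_eq_smul_eq (G := G)
    (e.injective.ne (infty_ne_coe (0 : F))) (e.injective.ne (coe_injective.ne zero_ne_one))
    (e.injective.ne (coe_ne_infty (1 : F)))
    (e.injective.ne (coe_ne_infty (0 : F))) (e.injective.ne (infty_ne_coe (1 : F)))
    (e.injective.ne (coe_injective.ne one_ne_zero))
  have hrange := range_toPermHom_eq haff hsharp ⟨w, rfl⟩ (e.symm_apply_eq.mpr hwi)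
    (e.symm_apply_eq.mpr hw0) (e.symm_apply_eq.mpr hw1)
  obtain ⟨ι⟩ := nonempty_range_toPermHom_mulEquiv (F := F)
  exact ⟨(φ.ofInjective hφ_inj).trans ((MulEquiv.subgroupCongr hrange.symm).trans ι)⟩

end SharplyThreeTransitive

section Assembly

open MulAction

theorem card_embedding_le_card {G α : Type*} [Group G] [MulAction G α] [Finite G] {n : ℕ}
    [IsMultiplyPretransitive G α n] [Nonempty (Fin n ↪ α)] :
    Nat.card (Fin n ↪ α) ≤ Nat.card G :=
  Nat.card_le_card_of_surjective _ (surjective_smul G (Classical.arbitrary (Fin n ↪ α)))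

theorem nonempty_gal_abhyankarTrinomial_mulEquiv {K : Type*} [Field K] [CharP K 7] {ζ : K}
    (hζ : ζ ^ 3 = 2) {t : K} (hirr : Irreducible (abhyankarTrinomial t))
    (hdvd : 7 ∣ Nat.card (abhyankarTrinomial t).Gal) {F : Type*} [Field F] [Finite F]
    (hF : Nat.card F = 8) :
    Nonempty ((abhyankarTrinomial t).Gal ≃* Matrix.ProjectiveSpecialLinearGroup (Fin 2) F) := by
  let f := abhyankarTrinomial t
  let Ω := AlgebraicClosure K
  have : Fact (Nat.Prime 7) := ⟨by norm_num⟩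
  have : Fact ((f.map (algebraMap K Ω)).Splits) := ⟨IsAlgClosed.splits _⟩
  have : IsPretransitive f.Gal (f.rootSet Ω) := Gal.galAction_isPretransitive f Ω hirr
  have : FaithfulSMul f.Gal (f.rootSet Ω) := ⟨fun h ↦
    Gal.galActionHom_injective f Ω (Equiv.ext h)⟩
  have hroots : Nat.card (f.rootSet Ω) = 7 + 2 := by
    rw [Nat.card_eq_fintype_card, card_rootSet_eq_natDegree (separable_abhyankarTrinomial t)
      Fact.out, natDegree_abhyankarTrinomial]
  have : IsMultiplyPretransitive f.Gal (f.rootSet Ω) 3 :=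
    isMultiplyPretransitive_three_of_card_eq_prime_add_two (p := 7) (by norm_num) hroots hdvd
  have : IsMultiplyPretransitive f.Gal (f.rootSet Ω) 2 :=
    isMultiplyPretransitive_of_le (n := 3) (by norm_num) (by rw [hroots]; norm_num)
  have hembedding : Nat.card (Fin 3 ↪ f.rootSet Ω) = 504 := by
    rw [Nat.card_eq_fintype_card, Fintype.card_embedding_eq, Fintype.card_fin,
      ← Nat.card_eq_fintype_card, hroots]
    rfl
  have : Nonempty (Fin 3 ↪ f.rootSet Ω) := (Nat.card_pos_iff.mp (by lia)).1
  refine nonempty_mulEquiv_projectiveSpecialLinearGroup (α := f.rootSet Ω) (p := 7) (by norm_num)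
    hroots (le_antisymm (card_gal_abhyankarTrinomial_le Ω hζ t) ?_) hF
  exact hembedding.symm.trans_le card_embedding_le_card

end Assembly

theorem stmt_2_general {k : Type*} [Field k] [CharP k 7] {ζ : k} (hζ : ζ ^ 3 = 2) {a : k}
    (ha : a ≠ 0) {s : ℕ} (hs : 0 < s) {f : Polynomial (RatFunc k)}
    (hf : f = X ^ 9 - C (algebraMap k (RatFunc k) a * RatFunc.X ^ s) * X ^ 2 + 1) :
    Nonempty (f.Gal ≃*
      Matrix.SpecialLinearGroup (Fin 2) (GaloisField 2 3) ⧸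
        Subgroup.center (Matrix.SpecialLinearGroup (Fin 2) (GaloisField 2 3))) := by
  have : CharP (RatFunc k) 7 :=
    charP_of_injective_algebraMap (algebraMap k (RatFunc k)).injective 7
  have h9 : (9 : k) ≠ 0 := fun h ↦ absurd ((CharP.cast_eq_zero_iff k 7 9).mp h) (by norm_num)
  subst hf
  exact nonempty_gal_abhyankarTrinomial_mulEquiv (ζ := algebraMap k (RatFunc k) ζ)
    (by rw [← map_pow, hζ, map_ofNat]) (irreducible_abhyankarTrinomial h9 ha hs.ne')
    (seven_dvd_card_gal ha hs.ne') (GaloisField.card 2 3 three_ne_zero)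

/-- Abhyankar: over an algebraically closed field `k` of characteristic `7`,
the Galois group of `Y^9 - a·X^s·Y^2 + 1` over `k(X)` is isomorphic to
`PSL(2, 8)`, the quotient of `SL(2, F_8)` by its center. -/
theorem stmt_2 (k : Type*) [Field k] [IsAlgClosed k] [CharP k 7]
    (a : k) (ha : a ≠ 0) (s : ℕ) (hs : 0 < s)
    (f : Polynomial (RatFunc k))
    (hf : f = X ^ 9 - C (algebraMap k (RatFunc k) a * RatFunc.X ^ s) * X ^ 2 + 1) :
    Nonempty (f.Gal ≃*
      Matrix.SpecialLinearGroup (Fin 2) (GaloisField 2 3) ⧸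
        Subgroup.center (Matrix.SpecialLinearGroup (Fin 2) (GaloisField 2 3))) := by
  obtain ⟨ζ, hζ⟩ := IsAlgClosed.exists_pow_nat_eq (2 : k) (n := 3) three_pos
  exact stmt_2_general hζ ha hs hf
end
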